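/- Let X be a Banach space and I ⊆ ℝ an open interval. Let A(t) be maximally dissipative with 0 ∈ ρ(A(t)) for every t ∈ I, and assume: (i) the operators A(t), t ∈ I, have a common domain of definition D(A(t)) = D; (ii) for each x ∈ X, (t,s) ↦ (t−s)^{-1}(A(t)A(s)^{-1} − 1)x is uniformly strongly continuous for t ≠ s in any fixed compact subinterval of I; (iii) the limit lim_{s→t} (t−s)^{-1}(A(t)A(s)^{-1} − 1)x exists uniformly for t in every fixed compact subinterval, and the limit is bounded and continuous in t. Then there exists a strongly continuous, bounded propagator U(t,s) on D_I such that for every x ∈ D, t ↦ U(t,s)x is a classical solution of the nonautonomous Cauchy problem u'(t) = A(t)u(t), u(s) = x. -/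

import Mathlib

open MeasureTheory Set Real Filter
open scoped Topology

/-!
Replace `A t` by its Yosida approximations `yosida (R t) n`, where `R t = (A t)⁻¹`. These are
bounded and dissipative, so they generate propagators `Φₙ` of contractions. By (ii), (iii) and the
uniform boundedness principle, `B t = lim (τ - t)⁻¹ (A τ (A t)⁻¹ - 1)` makes sense and is bounded,
and formally `w = A Φₙ(·, s) (A s)⁻¹ y` solves `w' = aₙ w + B w`, where `aₙ` is the approximation:
a bounded perturbation of the approximate equation. Hence `w` is bounded uniformly in `n`, and the
error made by freezing the coefficients on an interval of length `h` is `O(h²)`, again uniformly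
in `n`. On a fine grid `Φₙ(t, s) (A s)⁻¹ y` is thus uniformly close to a product of exponentials
of Yosida approximations of single operators, which converges as in the Hille-Yosida theorem. So
`Φₙ` converges strongly; `w` converges with it by Gronwall's inequality and is the continuous
derivative of the limit.
-/

section StrongLimits

variable {ι 𝕜 E F : Type*} [NontriviallyNormedField 𝕜] [NormedAddCommGroup E] [NormedSpace 𝕜 E]
  [NormedAddCommGroup F] [NormedSpace 𝕜 F] {T : ι → E →L[𝕜] F} {M : ℝ}

lemma tendsto_clm_apply_of_norm_le {l : Filter ι} {z : ι → E} {x : E} {y : F}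
    (hT : ∀ i, ‖T i‖ ≤ M) (hz : Tendsto z l (𝓝 x)) (hTx : Tendsto (fun i => T i x) l (𝓝 y)) :
    Tendsto (fun i => T i (z i)) l (𝓝 y) := by
  have herror : Tendsto (fun i => T i (z i - x)) l (𝓝 0) := by
    refine squeeze_zero_norm (fun i => (T i).le_of_opNorm_le (hT i) _) ?_
    simpa using (tendsto_iff_norm_sub_tendsto_zero.1 hz).const_mul M
  simpa using herror.add hTx

lemma continuous_clm_apply_of_norm_le [TopologicalSpace ι] {g : ι → E} (hT : ∀ i, ‖T i‖ ≤ M)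
    (hTc : ∀ x, Continuous fun i => T i x) (hg : Continuous g) :
    Continuous fun i => T i (g i) :=
  continuous_iff_continuousAt.2 fun i =>
    tendsto_clm_apply_of_norm_le hT hg.continuousAt (hTc (g i)).continuousAt

lemma tendsto_clm_apply_of_dense {l : Filter ι} {T' : E →L[𝕜] F} {s : Set E} (hs : Dense s)
    (hT : ∀ i, ‖T i‖ ≤ M) (hlim : ∀ x ∈ s, Tendsto (fun i => T i x) l (𝓝 (T' x))) (x : E) :
    Tendsto (fun i => T i x) l (𝓝 (T' x)) := by
  have hiff : (∃ C, ∀ i, ‖T i‖ ≤ C) ↔ Equicontinuous ((↑) ∘ T) :=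
    (NormedSpace.equicontinuous_TFAE T).out 5 1
  have hequi := hiff.1 ⟨M, hT⟩
  exact (hequi x).tendsto_of_mem_closure T'.continuous.continuousWithinAt hlim (hs x)

lemma cauchySeq_clm_apply_of_dense {T : ℕ → E →L[𝕜] F} {s : Set E} (hs : Dense s)
    (hT : ∀ n, ‖T n‖ ≤ M) (hcauchy : ∀ x ∈ s, CauchySeq fun n => T n x) (x : E) :
    CauchySeq fun n => T n x := by
  have key (x : E) : CauchySeq (fun n => T n x) ↔
      Tendsto (fun p : ℕ × ℕ => (T p.1 - T p.2) x) atTop (𝓝 ((0 : E →L[𝕜] F) x)) := by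
    simp only [cauchySeq_iff_tendsto_dist_atTop_0, dist_eq_norm, zero_apply, sub_apply,
      ← tendsto_zero_iff_norm_tendsto_zero]
  rw [key]
  refine tendsto_clm_apply_of_dense hs (M := M + M) (fun p => ?_) (fun y hy => ?_) x
  · exact norm_sub_le_of_le (hT _) (hT _)
  · exact (key y).1 (hcauchy y hy)

lemma cauchySeq_clm_apply_of_norm_le [CompleteSpace E] [CompleteSpace F] {T : ℕ → E →L[𝕜] F}
    {z : ℕ → E} (hT : ∀ n, ‖T n‖ ≤ M) (hTx : ∀ x, CauchySeq fun n => T n x) (hz : CauchySeq z) :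
    CauchySeq fun n => T n (z n) := by
  obtain ⟨x, hx⟩ := cauchySeq_tendsto_of_complete hz
  obtain ⟨y, hy⟩ := cauchySeq_tendsto_of_complete (hTx x)
  exact (tendsto_clm_apply_of_norm_le hT hx hy).cauchySeq

end StrongLimits

lemma cauchySeq_of_forall_exists_cauchySeq {α : Type*} [PseudoMetricSpace α] {v : ℕ → α}
    (h : ∀ ε > 0, ∃ z : ℕ → α, CauchySeq z ∧ ∀ n, dist (v n) (z n) ≤ ε) : CauchySeq v := by
  rw [Metric.cauchySeq_iff]
  intro ε hε
  obtain ⟨z, hz, hvz⟩ := h (ε / 3) (by positivity)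
  obtain ⟨N, hN⟩ := Metric.cauchySeq_iff.1 hz (ε / 3) (by positivity)
  refine ⟨N, fun m hm n hn => ?_⟩
  linarith [dist_triangle4 (v m) (z m) (z n) (v n), hvz m, hvz n, hN m hm n hn,
    dist_comm (z n) (v n)]

section DissipativeEstimates

variable {X : Type*} [NormedAddCommGroup X] [NormedSpace ℝ X] {u u' : ℝ → X} {s t ε : ℝ}

lemma norm_left_le_norm_right_add_of_accretive (hst : s ≤ t)
    (hu : ∀ r ∈ Icc s t, HasDerivWithinAt u (u' r) (Icc s t) r)
    (hacc : ∀ r ∈ Ico s t, ∀ h > 0, ‖u r‖ ≤ ‖u r + h • u' r‖ + h * ε) :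
    ‖u s‖ ≤ ‖u t‖ + ε * (t - s) := by
  have hlinear (r : ℝ) : HasDerivAt (fun r => -‖u s‖ + ε * (r - s)) ε r := by
    simpa using (((hasDerivAt_id r).sub_const s).const_mul ε).const_add (-‖u s‖)
  have hcont : ContinuousOn u (Icc s t) := fun r hr => (hu r hr).continuousWithinAt
  have hcomparison := image_le_of_liminf_slope_right_le_deriv_boundary (f := fun r => -‖u r‖)
    hcont.norm.neg (B := fun r => -‖u s‖ + ε * (r - s)) (by simp)
    (fun r _ => (hlinear r).continuousAt.continuousWithinAt)
    (fun r _ => (hlinear r).hasDerivWithinAt) (fun r hr q hq => ?_) (right_mem_Icc.2 hst)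
  · linarith
  have hslope : Tendsto (fun z => ε + ‖slope u r z - u' r‖) (𝓝[>] r) (𝓝 ε) := by
    have h := hasDerivWithinAt_iff_tendsto_slope.1 (hu r (Ico_subset_Icc_self hr))
    have hle : 𝓝[>] r ≤ 𝓝[Icc s t \ {r}] r := by
      rw [← nhdsWithin_Ioo_eq_nhdsGT hr.2]
      exact nhdsWithin_mono r fun z hz => ⟨⟨hr.1.trans hz.1.le, hz.2.le⟩, hz.1.ne'⟩
    simpa using ((tendsto_iff_norm_sub_tendsto_zero.1 (h.mono_left hle)).const_add ε)
  refine ((hslope.eventually_lt_const hq).and self_mem_nhdsWithin).frequently.mono ?_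
  rintro z ⟨hz, hrz : r < z⟩
  refine lt_of_le_of_lt ?_ hz
  have hpos : 0 < z - r := sub_pos.2 hrz
  have hstep : ‖u r + (z - r) • u' r‖ ≤ ‖u z‖ + (z - r) * ‖slope u r z - u' r‖ := by
    have heq : u r + (z - r) • u' r = u z - (z - r) • (slope u r z - u' r) := by
      rw [smul_sub, sub_smul_slope, vsub_eq_sub]; abel
    rw [heq, ← Real.norm_of_nonneg hpos.le, ← norm_smul, Real.norm_of_nonneg hpos.le]
    exact norm_sub_le _ _
  rw [slope_def_field, div_le_iff₀ hpos]
  linarith [hacc r hr _ hpos]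

lemma norm_right_le_norm_left_add_of_dissipative (hst : s ≤ t)
    (hu : ∀ r ∈ Icc s t, HasDerivWithinAt u (u' r) (Icc s t) r)
    (hdiss : ∀ r ∈ Ioc s t, ∀ μ > 0, μ * ‖u r‖ ≤ ‖μ • u r - u' r‖ + ε) :
    ‖u t‖ ≤ ‖u s‖ + ε * (t - s) := by
  have hreflect {r : ℝ} (hr : r ∈ Icc s t) : s + t - r ∈ Icc s t :=
    ⟨by linarith [hr.2], by linarith [hr.1]⟩
  have hderiv (r : ℝ) (hr : r ∈ Icc s t) :
      HasDerivWithinAt (fun r => u (s + t - r)) (-u' (s + t - r)) (Icc s t) r := by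
    have h := (hu _ (hreflect hr)).scomp r ((hasDerivWithinAt_id r _).const_sub (s + t))
      fun _ => hreflect
    simpa only [neg_smul, one_smul, Function.comp_def, id_eq] using h
  have h := norm_left_le_norm_right_add_of_accretive hst hderiv (ε := ε) fun r hr h hh => ?_
  · simpa using h
  have hscaled := mul_le_mul_of_nonneg_left
    (hdiss (s + t - r) ⟨by linarith [hr.2], by linarith [hr.1]⟩ h⁻¹ (inv_pos.2 hh)) hh.le
  have heq : u (s + t - r) + h • -u' (s + t - r) =
      h • (h⁻¹ • u (s + t - r) - u' (s + t - r)) := by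
    rw [smul_sub, smul_inv_smul₀ hh.ne', smul_neg, ← sub_eq_add_neg]
  rwa [mul_inv_cancel_left₀ hh.ne', mul_add, ← abs_of_pos hh, ← Real.norm_eq_abs, ← norm_smul,
    Real.norm_of_nonneg hh.le, ← heq] at hscaled

end DissipativeEstimates

lemma le_mul_exp_of_le_add_mul_integral {e : ℝ → ℝ} {C K s d : ℝ} (he : Continuous e) (hK : 0 ≤ K)
    (h : ∀ t ∈ Icc s d, e t ≤ C + K * ∫ r in s..t, e r) :
    ∀ t ∈ Icc s d, e t ≤ C * exp (K * (t - s)) := by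
  intro t ht
  have hderiv (r : ℝ) : HasDerivAt (fun t => C + K * ∫ r in s..t, e r) (K * e r) r :=
    ((he.integral_hasStrictDerivAt s r).hasDerivAt.const_mul K).const_add C
  have hgronwall := le_gronwallBound_of_liminf_deriv_right_le (δ := C) (K := K) (ε := 0)
    (fun r _ => (hderiv r).continuousAt.continuousWithinAt)
    (fun r _ _ hq =>
      (hderiv r).hasDerivWithinAt.liminf_right_slope_le hq) (by simp)
    (fun r hr => by simpa using mul_le_mul_of_nonneg_left (h r (Ico_subset_Icc_self hr)) hK) t ht
  exact (h t ht).trans (by simpa [gronwallBound_ε0] using hgronwall)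

section Gronwall

variable {e δ : ℝ → ℝ} {K s d : ℝ}

lemma le_add_mul_exp_mul_integral (he : Continuous e) (hδ : Continuous δ) (hδ0 : 0 ≤ δ)
    (hK : 0 ≤ K) (h : ∀ t ∈ Icc s d, e t ≤ δ t + K * ∫ r in s..t, e r) :
    ∀ t ∈ Icc s d, e t ≤ δ t + K * ((∫ r in s..d, δ r) * exp (K * (t - s))) := by
  have hF : Continuous fun t => ∫ r in s..t, e r :=
    intervalIntegral.continuous_primitive (fun _ _ => he.intervalIntegrable _ _) s
  have hbound := le_mul_exp_of_le_add_mul_integral (C := ∫ r in s..d, δ r) (s := s) (d := d) hF hK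
    fun t ht => ?_
  · exact fun t ht => (h t ht).trans (by gcongr; exact hbound t ht)
  calc ∫ r in s..t, e r ≤ ∫ r in s..t, (δ r + K * ∫ q in s..r, e q) :=
        intervalIntegral.integral_mono_on ht.1 (he.intervalIntegrable _ _)
          ((hδ.add (hF.const_mul K)).intervalIntegrable _ _)
          fun r hr => h r ⟨hr.1, hr.2.trans ht.2⟩
    _ = (∫ r in s..t, δ r) + K * ∫ r in s..t, ∫ q in s..r, e q := by
        rw [intervalIntegral.integral_add (hδ.intervalIntegrable _ _)
          ((hF.const_mul K).intervalIntegrable _ _), intervalIntegral.integral_const_mul]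
    _ ≤ (∫ r in s..d, δ r) + K * ∫ r in s..t, ∫ q in s..r, e q := by
        gcongr
        exact intervalIntegral.integral_mono_interval le_rfl ht.1 ht.2
          (Eventually.of_forall hδ0) (hδ.intervalIntegrable _ _)

end Gronwall

section Volterra

variable {E : Type*} [NormedAddCommGroup E] [NormedSpace ℝ E] {s d : ℝ}

lemma continuous_add_integral_kernel {k : ℝ → ℝ → E → E} {g v : ℝ → E}
    (hk : Continuous fun q : ℝ × ℝ × E => k q.1 q.2.1 q.2.2) (hg : Continuous g)
    (hv : Continuous v) : Continuous fun t => g t + ∫ r in s..t, k t r (v r) :=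
  hg.add <| intervalIntegral.continuous_parametric_intervalIntegral_of_continuous
    (f := fun t r => k t r (v r))
    (hk.comp (by fun_prop : Continuous fun q : ℝ × ℝ => (q.1, q.2, v q.2))) continuous_id

lemma exists_volterra_solution_of_integral_le [CompleteSpace E] {k : ℝ → ℝ → E → E}
    {b : ℝ → ℝ → ℝ} {θ : NNReal} {g : ℝ → E}
    (hk : Continuous fun q : ℝ × ℝ × E => k q.1 q.2.1 q.2.2)
    (hb : ∀ t, Continuous (b t)) (hb0 : ∀ t r, 0 ≤ b t r)
    (hLip : ∀ t r x y, ‖k t r x - k t r y‖ ≤ b t r * ‖x - y‖)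
    (hθ : θ < 1) (hbθ : ∀ t ∈ Icc s d, ∫ r in s..t, b t r ≤ θ)
    (hg : Continuous g) (hsd : s ≤ d) :
    ∃ v : ℝ → E, Continuous v ∧ ∀ t ∈ Icc s d, v t = g t + ∫ r in s..t, k t r (v r) := by
  have hext (f : C(Icc s d, E)) : Continuous (IccExtend hsd f) := f.continuous.Icc_extend'
  let Ψ (f : C(Icc s d, E)) : C(Icc s d, E) :=
    ⟨fun t => g t + ∫ r in s..t, k t r (IccExtend hsd f r),
      (continuous_add_integral_kernel hk hg (hext f)).comp continuous_subtype_val⟩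
  have hΨ : ContractingWith θ Ψ := by
    refine ⟨hθ, LipschitzWith.of_dist_le_mul fun f₁ f₂ => ?_⟩
    rw [ContinuousMap.dist_le (by positivity)]
    rintro ⟨t, ht⟩
    have hint (f : C(Icc s d, E)) :
        IntervalIntegrable (fun r => k t r (IccExtend hsd f r)) volume s t :=
      (hk.comp (continuous_const.prodMk (continuous_id.prodMk (hext f)))).intervalIntegrable _ _
    have hpoint (r : ℝ) : ‖k t r (IccExtend hsd f₁ r) - k t r (IccExtend hsd f₂ r)‖ ≤
        b t r * dist f₁ f₂ := by
      refine (hLip t r _ _).trans (mul_le_mul_of_nonneg_left ?_ (hb0 t r))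
      rw [← dist_eq_norm]
      exact ContinuousMap.dist_apply_le_dist _
    calc dist (Ψ f₁ ⟨t, ht⟩) (Ψ f₂ ⟨t, ht⟩)
        = ‖∫ r in s..t, (k t r (IccExtend hsd f₁ r) - k t r (IccExtend hsd f₂ r))‖ := by
          rw [intervalIntegral.integral_sub (hint f₁) (hint f₂), dist_eq_norm]
          exact congrArg _ (add_sub_add_left_eq_sub _ _ _)
      _ ≤ ∫ r in s..t, b t r * dist f₁ f₂ :=
          intervalIntegral.norm_integral_le_of_norm_le ht.1
            (Eventually.of_forall fun r _ => hpoint r) (((hb t).mul_const _).intervalIntegrable _ _)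
      _ ≤ θ * dist f₁ f₂ := by
          rw [intervalIntegral.integral_mul_const]
          gcongr
          exact hbθ t ht
  let f := ContractingWith.fixedPoint Ψ hΨ
  refine ⟨IccExtend hsd f, hext f, fun t ht => ?_⟩
  rw [IccExtend_of_mem hsd _ ht]
  exact (DFunLike.congr_fun hΨ.fixedPoint_isFixedPt ⟨t, ht⟩).symm

lemma integral_mul_exp_neg_mul_sub_le {K M t : ℝ} (hK : 0 ≤ K) (hM : 0 < M) :
    ∫ r in s..t, K * exp (-(M * (t - r))) ≤ K / M := by
  have hderiv (r : ℝ) :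
      HasDerivAt (fun r => K / M * exp (-(M * (t - r)))) (K * exp (-(M * (t - r)))) r := by
    have h := ((((hasDerivAt_id r).const_sub t).const_mul M).neg.exp).const_mul (K / M)
    refine h.congr_deriv ?_
    simp only [Pi.neg_apply, id_eq, mul_neg, mul_one, neg_neg]
    field_simp
  rw [intervalIntegral.integral_eq_sub_of_hasDerivAt (fun r _ => hderiv r)
    ((by fun_prop : Continuous fun r => K * exp (-(M * (t - r)))).intervalIntegrable _ _)]
  have hnonneg : 0 ≤ K / M * exp (-(M * (t - s))) := by positivity
  simpa using hnonneg

lemma exists_volterra_solution [CompleteSpace E] {k : ℝ → ℝ → E → E} {K : ℝ} {g : ℝ → E}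
    (hk : Continuous fun q : ℝ × ℝ × E => k q.1 q.2.1 q.2.2) (hK : 0 ≤ K)
    (hLip : ∀ t r x y, ‖k t r x - k t r y‖ ≤ K * ‖x - y‖) (hg : Continuous g) (hsd : s ≤ d) :
    ∃ v : ℝ → E, Continuous v ∧ ∀ t ∈ Icc s d, v t = g t + ∫ r in s..t, k t r (v r) := by
  -- Bielecki's weight: `t ↦ exp (-M (t - s)) • v t` solves an equation with a contractive kernel.
  set M : ℝ := 2 * K + 1
  have hweight (t r : ℝ) : exp (-(M * (t - r))) = exp (-(M * (t - s))) * exp (M * (r - s)) := by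
    rw [← exp_add]; ring_nf
  have hweightLip (t r : ℝ) (x y : E) : ‖exp (-(M * (t - s))) • k t r (exp (M * (r - s)) • x) -
      exp (-(M * (t - s))) • k t r (exp (M * (r - s)) • y)‖ ≤
      K * exp (-(M * (t - r))) * ‖x - y‖ := by
    rw [← smul_sub, norm_smul, Real.norm_of_nonneg (exp_pos _).le]
    refine (mul_le_mul_of_nonneg_left (hLip _ _ _ _) (exp_pos _).le).trans_eq ?_
    rw [← smul_sub, norm_smul, Real.norm_of_nonneg (exp_pos _).le, hweight t r]
    ring
  have hhalf : K / M ≤ ((1 / 2 : NNReal) : ℝ) := by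
    rw [div_le_iff₀ (by positivity)]
    simp only [M, NNReal.coe_div, NNReal.coe_one, NNReal.coe_ofNat]
    linarith
  obtain ⟨f, hf, hfeq⟩ := exists_volterra_solution_of_integral_le (s := s) (d := d) (θ := 1 / 2)
    (k := fun t r x => exp (-(M * (t - s))) • k t r (exp (M * (r - s)) • x))
    (g := fun t => exp (-(M * (t - s))) • g t)
    (.smul (by fun_prop) (hk.comp
      (by fun_prop : Continuous fun q : ℝ × ℝ × E => (q.1, q.2.1, exp (M * (q.2.1 - s)) • q.2.2))))
    (fun t => by fun_prop) (fun t r => by positivity) hweightLip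
    (by rw [← NNReal.coe_lt_coe]; norm_num)
    (fun t _ => (integral_mul_exp_neg_mul_sub_le hK (by positivity)).trans hhalf) (by fun_prop) hsd
  refine ⟨fun t => exp (M * (t - s)) • f t, by fun_prop, fun t ht => ?_⟩
  beta_reduce
  rw [hfeq t ht, smul_add, ← intervalIntegral.integral_smul]
  simp only [smul_smul, ← exp_add, add_neg_cancel, exp_zero, one_smul]

variable {k : ℝ → ℝ → E →L[ℝ] E} {K C : ℝ} {g v : ℝ → E}

lemma continuous_kernel_uncurry (hkK : ∀ t r, ‖k t r‖ ≤ K)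
    (hkc : ∀ x, Continuous fun q : ℝ × ℝ => k q.1 q.2 x) :
    Continuous fun q : ℝ × ℝ × E => k q.1 q.2.1 q.2.2 :=
  continuous_clm_apply_of_norm_le (T := fun q : ℝ × ℝ × E => k q.1 q.2.1) (fun _ => hkK _ _)
    (fun x => (hkc x).comp (by fun_prop : Continuous fun q : ℝ × ℝ × E => (q.1, q.2.1)))
    (by fun_prop)

lemma continuous_kernel_apply (hkK : ∀ t r, ‖k t r‖ ≤ K)
    (hkc : ∀ x, Continuous fun q : ℝ × ℝ => k q.1 q.2 x) (hv : Continuous v) (t : ℝ) :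
    Continuous fun r => k t r (v r) :=
  (continuous_kernel_uncurry hkK hkc).comp (by fun_prop : Continuous fun r => (t, r, v r))

lemma norm_integral_kernel_le (hkK : ∀ t r, ‖k t r‖ ≤ K) (hv : Continuous v) {t : ℝ}
    (hst : s ≤ t) : ‖∫ r in s..t, k t r (v r)‖ ≤ K * ∫ r in s..t, ‖v r‖ := by
  rw [← intervalIntegral.integral_const_mul]
  exact intervalIntegral.norm_integral_le_of_norm_le hst
    (Eventually.of_forall fun r _ => (k t r).le_of_opNorm_le (hkK t r) _)
    ((hv.norm.const_mul K).intervalIntegrable _ _)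

lemma norm_volterra_solution_le (hkK : ∀ t r, ‖k t r‖ ≤ K) (hgC : ∀ t ∈ Icc s d, ‖g t‖ ≤ C)
    (hv : Continuous v) (hveq : ∀ t ∈ Icc s d, v t = g t + ∫ r in s..t, k t r (v r)) :
    ∀ t ∈ Icc s d, ‖v t‖ ≤ C * exp (K * (t - s)) := by
  have hK : 0 ≤ K := (norm_nonneg _).trans (hkK 0 0)
  refine le_mul_exp_of_le_add_mul_integral hv.norm hK fun t ht => ?_
  nth_rewrite 1 [hveq t ht]
  exact norm_add_le_of_le (hgC t ht) (norm_integral_kernel_le hkK hv ht.1)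

lemma norm_volterra_solution_sub_le (hkK : ∀ t r, ‖k t r‖ ≤ K)
    (hkc : ∀ x, Continuous fun q : ℝ × ℝ => k q.1 q.2 x) (hg : Continuous g) {u : ℝ → E}
    (hv : Continuous v) (hu : Continuous u)
    (hveq : ∀ t ∈ Icc s d, v t = g t + ∫ r in s..t, k t r (v r)) :
    ∀ t ∈ Icc s d, ‖v t - u t‖ ≤ ‖g t + (∫ r in s..t, k t r (u r)) - u t‖ +
      K * ((∫ τ in s..d, ‖g τ + (∫ r in s..τ, k τ r (u r)) - u τ‖) * exp (K * (t - s))) := by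
  have hK : 0 ≤ K := (norm_nonneg _).trans (hkK 0 0)
  have hresidual : Continuous fun t => ‖g t + (∫ r in s..t, k t r (u r)) - u t‖ :=
    ((continuous_add_integral_kernel (continuous_kernel_uncurry hkK hkc) hg hu).sub hu).norm
  refine le_add_mul_exp_mul_integral (hv.sub hu).norm hresidual (fun r => norm_nonneg _) hK
    fun t ht => ?_
  have heq : v t - u t =
      g t + (∫ r in s..t, k t r (u r)) - u t + ∫ r in s..t, k t r (v r - u r) := by
    simp only [map_sub]
    rw [intervalIntegral.integral_sub
      ((continuous_kernel_apply hkK hkc hv t).intervalIntegrable _ _)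
      ((continuous_kernel_apply hkK hkc hu t).intervalIntegrable _ _), hveq t ht]
    abel
  rw [heq]
  exact norm_add_le_of_le le_rfl (norm_integral_kernel_le hkK (hv.sub hu) ht.1)

lemma tendsto_volterra_solution {kₙ : ℕ → ℝ → ℝ → E →L[ℝ] E} {gₙ vₙ : ℕ → ℝ → E}
    (hkK : ∀ n t r, ‖kₙ n t r‖ ≤ K) (hkc : ∀ n x, Continuous fun q : ℝ × ℝ => kₙ n q.1 q.2 x)
    (hk : ∀ t r x, Tendsto (fun n => kₙ n t r x) atTop (𝓝 (k t r x)))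
    (hgc : ∀ n, Continuous (gₙ n)) (hgC : ∀ n t, ‖gₙ n t‖ ≤ C)
    (hg : ∀ t, Tendsto (fun n => gₙ n t) atTop (𝓝 (g t)))
    (hvₙ : ∀ n, Continuous (vₙ n)) (hv : Continuous v)
    (hvₙeq : ∀ n, ∀ t ∈ Icc s d, vₙ n t = gₙ n t + ∫ r in s..t, kₙ n t r (vₙ n r))
    (hveq : ∀ t ∈ Icc s d, v t = g t + ∫ r in s..t, k t r (v r)) :
    ∀ t ∈ Icc s d, Tendsto (fun n => vₙ n t) atTop (𝓝 (v t)) := by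
  intro t ht
  have hsd : s ≤ d := ht.1.trans ht.2
  let ρ (n : ℕ) (t : ℝ) : ℝ := ‖gₙ n t + (∫ r in s..t, kₙ n t r (v r)) - v t‖
  have hρc (n : ℕ) : Continuous (ρ n) := ((continuous_add_integral_kernel
    (continuous_kernel_uncurry (hkK n) (hkc n)) (hgc n) hv).sub hv).norm
  have hρ (t : ℝ) (ht : t ∈ Icc s d) : Tendsto (fun n => ρ n t) atTop (𝓝 0) := by
    rw [← tendsto_iff_norm_sub_tendsto_zero, hveq t ht]
    exact (hg t).add (intervalIntegral.tendsto_integral_filter_of_dominated_convergence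
      (fun r => K * ‖v r‖) (Eventually.of_forall fun n =>
        (continuous_kernel_apply (hkK n) (hkc n) hv t).aestronglyMeasurable)
      (Eventually.of_forall fun n => Eventually.of_forall fun r _ =>
        (kₙ n t r).le_of_opNorm_le (hkK n t r) _)
      ((hv.norm.const_mul K).intervalIntegrable _ _)
      (Eventually.of_forall fun r _ => hk t r (v r)))
  have hρbound (n : ℕ) (t : ℝ) (ht : t ∈ Icc s d) :
      ‖ρ n t‖ ≤ C + (K * ∫ r in s..t, ‖v r‖) + ‖v t‖ := by
    rw [norm_norm]
    exact norm_sub_le_of_le (norm_add_le_of_le (hgC n t)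
      (norm_integral_kernel_le (hkK n) hv ht.1)) le_rfl
  have hboundc : Continuous fun t => C + (K * ∫ r in s..t, ‖v r‖) + ‖v t‖ := by
    have := intervalIntegral.continuous_primitive (fun _ _ => hv.norm.intervalIntegrable _ _) s
      (μ := volume)
    fun_prop
  have hintegral : Tendsto (fun n => ∫ r in s..d, ρ n r) atTop (𝓝 0) := by
    have hmem {r : ℝ} (hr : r ∈ uIoc s d) : r ∈ Icc s d :=
      Ioc_subset_Icc_self (uIoc_of_le hsd ▸ hr)
    simpa using intervalIntegral.tendsto_integral_filter_of_dominated_convergence (μ := volume)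
      (f := fun _ => (0 : ℝ)) _
      (Eventually.of_forall fun n => (hρc n).aestronglyMeasurable)
      (Eventually.of_forall fun n => Eventually.of_forall fun r hr => hρbound n r (hmem hr))
      (hboundc.intervalIntegrable s d) (Eventually.of_forall fun r hr => hρ r (hmem hr))
  rw [tendsto_iff_norm_sub_tendsto_zero]
  refine squeeze_zero (fun n => norm_nonneg _) (fun n => norm_volterra_solution_sub_le
    (hkK n) (hkc n) (hgc n) (hvₙ n) hv (hvₙeq n) t ht) ?_
  simpa using (hρ t ht).add ((hintegral.mul_const (exp (K * (t - s)))).const_mul K)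

end Volterra

section LinearEquations

lemma exists_hasDerivAt_of_clm {E : Type*} [NormedAddCommGroup E] [NormedSpace ℝ E]
    [CompleteSpace E] {a : ℝ → E →L[ℝ] E} {M c d : ℝ} (ha : Continuous a) (haM : ∀ t, ‖a t‖ ≤ M)
    (hcd : c ≤ d) (x : E) :
    ∃ y : ℝ → E, y c = x ∧ Continuous y ∧ ∀ t ∈ Icc c d, HasDerivAt y (a t (y t)) t := by
  obtain ⟨v, hv, hveq⟩ := exists_volterra_solution (k := fun _ r x => a r x) (K := M)
    (g := fun _ => x) (by fun_prop) ((norm_nonneg _).trans (haM 0))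
    (fun _ r x y => by rw [← map_sub]; exact (a r).le_of_opNorm_le (haM r) _)
    continuous_const hcd
  have hderiv (t : ℝ) : HasDerivAt (fun t => x + ∫ r in c..t, a r (v r)) (a t (v t)) t :=
    (((ha.clm_apply hv).integral_hasStrictDerivAt c t).hasDerivAt).const_add x
  refine ⟨_, by simp, continuous_iff_continuousAt.2 fun t => (hderiv t).continuousAt,
    fun t ht => ?_⟩
  simpa only [← hveq t ht] using hderiv t

variable {𝔸 : Type*} [NormedRing 𝔸] [NormedAlgebra ℝ 𝔸]

lemma mul_eq_one_of_hasDerivAt {a Y Z : ℝ → 𝔸} {M c d : ℝ} (haM : ∀ t, ‖a t‖ ≤ M)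
    (hYc : Y c * Z c = 1) (hY : ∀ t ∈ Icc c d, HasDerivAt Y (a t * Y t) t)
    (hZ : ∀ t ∈ Icc c d, HasDerivAt Z (-(Z t * a t)) t) : ∀ t ∈ Icc c d, Y t * Z t = 1 := by
  have hderiv (t : ℝ) (ht : t ∈ Icc c d) :
      HasDerivAt (fun t => Y t * Z t - 1) (a t * (Y t * Z t - 1) - (Y t * Z t - 1) * a t) t := by
    refine (((hY t ht).mul (hZ t ht)).sub_const 1).congr_deriv ?_
    noncomm_ring
  have hbound (t : ℝ) : ‖a t * (Y t * Z t - 1) - (Y t * Z t - 1) * a t‖ ≤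
      2 * M * ‖Y t * Z t - 1‖ + 0 := by
    refine (norm_sub_le_of_le (norm_mul_le _ _) (norm_mul_le _ _)).trans ?_
    linarith [mul_le_mul_of_nonneg_right (haM t) (norm_nonneg (Y t * Z t - 1))]
  intro t ht
  have h := norm_le_gronwallBound_of_norm_deriv_right_le (δ := 0)
    (fun r hr => (hderiv r hr).continuousAt.continuousWithinAt)
    (fun r hr => (hderiv r (Ico_subset_Icc_self hr)).hasDerivWithinAt) (by simp [hYc])
    (fun r _ => hbound r) t ht
  rw [gronwallBound_ε0_δ0, norm_le_zero_iff, sub_eq_zero] at h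
  exact h

lemma exists_fundamental_pair [CompleteSpace 𝔸] {a : ℝ → 𝔸} {M c d : ℝ} (ha : Continuous a)
    (haM : ∀ t, ‖a t‖ ≤ M) (hcd : c ≤ d) :
    ∃ Y Z : ℝ → 𝔸, Continuous Y ∧ Continuous Z ∧
      (∀ t ∈ Icc c d, HasDerivAt Y (a t * Y t) t) ∧
      (∀ t ∈ Icc c d, Z t * Y t = 1) ∧ (∀ t ∈ Icc c d, Y t * Z t = 1) := by
  obtain ⟨Y, hYc, hYcont, hY⟩ := exists_hasDerivAt_of_clm (M := M)
    (a := fun t => ContinuousLinearMap.mul ℝ 𝔸 (a t)) (by fun_prop)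
    (fun t => (ContinuousLinearMap.opNorm_mul_apply_le ℝ _ (a t)).trans (haM t)) hcd 1
  have hmulRight (t : ℝ) : ‖-(ContinuousLinearMap.mul ℝ 𝔸).flip (a t)‖ ≤ M := by
    rw [norm_neg]
    refine ContinuousLinearMap.opNorm_le_bound _ ((norm_nonneg _).trans (haM t)) fun x => ?_
    refine (norm_mul_le _ _).trans ?_
    rw [mul_comm]
    exact mul_le_mul_of_nonneg_right (haM t) (norm_nonneg x)
  obtain ⟨Z, hZc, hZcont, hZ⟩ := exists_hasDerivAt_of_clm (M := M)
    (a := fun t => -(ContinuousLinearMap.mul ℝ 𝔸).flip (a t)) (by fun_prop)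
    hmulRight hcd 1
  have hZY (t : ℝ) (ht : t ∈ Icc c d) : HasDerivAt (fun t => Z t * Y t) 0 t := by
    refine ((hZ t ht).mul (hY t ht)).congr_deriv ?_
    simp only [neg_apply, ContinuousLinearMap.flip_apply, ContinuousLinearMap.mul_apply']
    noncomm_ring
  refine ⟨Y, Z, hYcont, hZcont, fun t ht => hY t ht, fun t ht => ?_,
    mul_eq_one_of_hasDerivAt haM (by rw [hYc, hZc, one_mul]) hY hZ⟩
  have h := constant_of_has_deriv_right_zero (hZcont.mul hYcont).continuousOn
    (fun r hr => (hZY r (Ico_subset_Icc_self hr)).hasDerivWithinAt) t ht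
  simpa only [Pi.mul_apply, hYc, hZc, one_mul] using h

end LinearEquations

section Propagators

variable {X : Type*} [NormedAddCommGroup X] [NormedSpace ℝ X]

/-- A bounded operator `a` is dissipative if `‖(μ - a) x‖ ≥ μ ‖x‖` for all `μ > 0`. -/
def IsDissipative (a : X →L[ℝ] X) : Prop :=
  ∀ μ : ℝ, 0 < μ → ∀ x, μ * ‖x‖ ≤ ‖μ • x - a x‖

lemma norm_le_of_hasDerivWithinAt_dissipative {a : ℝ → X →L[ℝ] X} {u f : ℝ → X} {s t ε : ℝ}
    (hst : s ≤ t) (ha : ∀ r, IsDissipative (a r))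
    (hu : ∀ r ∈ Icc s t, HasDerivWithinAt u (a r (u r) + f r) (Icc s t) r)
    (hf : ∀ r ∈ Icc s t, ‖f r‖ ≤ ε) : ‖u t‖ ≤ ‖u s‖ + ε * (t - s) := by
  refine norm_right_le_norm_left_add_of_dissipative hst hu fun r hr μ hμ => ?_
  refine (ha r μ hμ (u r)).trans ?_
  have heq : μ • u r - a r (u r) = μ • u r - (a r (u r) + f r) + f r := by abel
  rw [heq]
  exact norm_add_le_of_le le_rfl (hf r (Ioc_subset_Icc_self hr))

/-- A strongly continuous propagator of contractions on `ℝ`, with `s` the initial and `t` the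
final time in `U t s`. It is made a total function by the convention `U t s = 1` for `t ≤ s`. -/
structure IsContractionPropagator (U : ℝ → ℝ → X →L[ℝ] X) : Prop where
  norm_le_one : ∀ t s, ‖U t s‖ ≤ 1
  continuous_apply : ∀ x, Continuous fun q : ℝ × ℝ => U q.1 q.2 x
  eq_one : ∀ {t s}, t ≤ s → U t s = 1
  apply_apply : ∀ {t r s}, s ≤ r → r ≤ t → ∀ x, U t r (U r s x) = U t s x

namespace IsContractionPropagator

variable {U : ℝ → ℝ → X →L[ℝ] X}

lemma norm_apply_le (hU : IsContractionPropagator U) (t s : ℝ) (x : X) : ‖U t s x‖ ≤ ‖x‖ := by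
  simpa using (U t s).le_of_opNorm_le (hU.norm_le_one t s) x

lemma norm_sub_initial_le (hnorm : ∀ t s, ‖U t s‖ ≤ 1) (hone : ∀ {t s}, t ≤ s → U t s = 1)
    (happly : ∀ {t r s}, s ≤ r → r ≤ t → ∀ x, U t r (U r s x) = U t s x) {x : X} {Λ : NNReal}
    (hΛ : ∀ s, LipschitzWith Λ fun t => U t s x) (t : ℝ) {s s' : ℝ} (hss' : s ≤ s') :
    ‖U t s x - U t s' x‖ ≤ Λ * (s' - s) := by
  rcases le_total t s' with ht | ht
  · rcases le_total t s with hts | hst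
    · simp only [hone hts, hone ht, sub_self, norm_zero]
      exact mul_nonneg Λ.coe_nonneg (sub_nonneg.2 hss')
    · have h := (hΛ s).norm_sub_le t s
      rw [hone le_rfl, ← hone ht, Real.norm_of_nonneg (sub_nonneg.2 hst)] at h
      exact h.trans (by gcongr)
  · have h := (hΛ s).norm_sub_le s' s
    rw [hone le_rfl, one_apply_eq_self, Real.norm_of_nonneg (sub_nonneg.2 hss')] at h
    rw [← happly hss' ht, ← map_sub]
    refine ((U t s').le_of_opNorm_le (hnorm _ _) _).trans ?_
    simpa using h

lemma of_lipschitz (hnorm : ∀ t s, ‖U t s‖ ≤ 1) (hone : ∀ {t s}, t ≤ s → U t s = 1)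
    (happly : ∀ {t r s}, s ≤ r → r ≤ t → ∀ x, U t r (U r s x) = U t s x) {S : Set X}
    (hS : Dense S) (hLip : ∀ x ∈ S, ∃ Λ : NNReal, ∀ s, LipschitzWith Λ fun t => U t s x) :
    IsContractionPropagator U := by
  refine ⟨hnorm, fun x => continuous_iff_continuousAt.2 fun q => ?_, hone, happly⟩
  refine tendsto_clm_apply_of_dense (T := fun q : ℝ × ℝ => U q.1 q.2) hS
    (fun q => hnorm _ _) (fun x hx => ?_) x
  obtain ⟨Λ, hΛ⟩ := hLip x hx
  have hinitial (t : ℝ) : LipschitzWith Λ fun s => U t s x := by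
    refine LipschitzWith.of_dist_le_mul fun s s' => ?_
    wlog hss' : s ≤ s' generalizing s s'
    · rw [dist_comm, dist_comm s]
      exact this s' s (le_of_not_ge hss')
    rw [dist_eq_norm, dist_comm, Real.dist_eq, abs_of_nonneg (sub_nonneg.2 hss')]
    exact norm_sub_initial_le hnorm hone happly hΛ t hss'
  exact (LipschitzWith.uncurry (f := fun t s => U t s x) hΛ hinitial).continuous.continuousAt

end IsContractionPropagator

/-- `Φ` is the propagator on `[c, d]` of the family `a` of bounded operators, in the form that
Duhamel's formula solves the inhomogeneous equation `u' = a u + f`, `u s = y`. Times outside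
`[c, d]` are clamped to it. -/
structure IsPropagatorOf (a : ℝ → X →L[ℝ] X) (c d : ℝ) (Φ : ℝ → ℝ → X →L[ℝ] X) : Prop extends
    IsContractionPropagator Φ where
  clamp : ∀ (hcd : c ≤ d) t s, Φ (projIcc c d hcd t) (projIcc c d hcd s) = Φ t s
  duhamel : ∀ {s}, s ∈ Icc c d → ∀ {f : ℝ → X}, Continuous f → ∀ y, ∀ t ∈ Icc s d,
    HasDerivWithinAt (fun t => Φ t s y + ∫ r in s..t, Φ t r (f r))
      (a t (Φ t s y + ∫ r in s..t, Φ t r (f r)) + f t) (Icc s d) t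

variable {a : ℝ → X →L[ℝ] X} {c d : ℝ}

lemma IsPropagatorOf.hasDerivWithinAt {Φ : ℝ → ℝ → X →L[ℝ] X} (hΦ : IsPropagatorOf a c d Φ)
    {s : ℝ} (hs : s ∈ Icc c d) (y : X) {t : ℝ} (ht : t ∈ Icc s d) :
    HasDerivWithinAt (fun t => Φ t s y) (a t (Φ t s y)) (Icc s d) t := by
  simpa using hΦ.duhamel hs (continuous_const (y := (0 : X))) y t ht

lemma IsPropagatorOf.lipschitzWith_of_lipschitzOnWith {Φ : ℝ → ℝ → X →L[ℝ] X}
    (hΦ : IsPropagatorOf a c d Φ) (hcd : c ≤ d) {x : X} {Λ : NNReal}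
    (hΛ : ∀ s ∈ Icc c d, LipschitzOnWith Λ (fun t => Φ t s x) (Icc s d)) (s : ℝ) :
    LipschitzWith Λ fun t => Φ t s x := by
  let p (t : ℝ) : ℝ := projIcc c d hcd t
  have hp (t : ℝ) : p t ∈ Icc c d := (projIcc c d hcd t).2
  have heq (t : ℝ) : Φ t s x = Φ (max (p t) (p s)) (p s) x := by
    rw [← hΦ.clamp hcd t s]
    rcases le_total (p t) (p s) with h | h
    · rw [max_eq_right h, hΦ.eq_one h, hΦ.eq_one le_rfl]
    · rw [max_eq_left h]
  have hmem (t : ℝ) : max (p t) (p s) ∈ Icc (p s) d := ⟨le_max_right _ _, max_le (hp t).2 (hp s).2⟩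
  refine LipschitzWith.of_dist_le_mul fun t t' => ?_
  rw [heq, heq]
  refine ((hΛ (p s) (hp s)).dist_le_mul _ (hmem t) _ (hmem t')).trans
    (mul_le_mul_of_nonneg_left ?_ Λ.coe_nonneg)
  exact (abs_max_sub_max_le_abs _ _ _).trans (abs_projIcc_sub_projIcc hcd)

lemma hasDerivAt_duhamel [CompleteSpace X] {Y Z : ℝ → X →L[ℝ] X} {t : ℝ}
    (hY : HasDerivAt Y (a t * Y t) t) (hZ : Continuous Z) (hYZ : Y t * Z t = 1) (s : ℝ)
    {f : ℝ → X} (hf : Continuous f) (x : X) :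
    HasDerivAt (fun t => Y t (x + ∫ r in s..t, Z r (f r)))
      (a t (Y t (x + ∫ r in s..t, Z r (f r))) + f t) t := by
  have hinner : HasDerivAt (fun t => x + ∫ r in s..t, Z r (f r)) (Z t (f t)) t :=
    (((hZ.clm_apply hf).integral_hasStrictDerivAt s t).hasDerivAt).const_add x
  have hYZf : Y t (Z t (f t)) = f t := DFunLike.congr_fun hYZ (f t)
  refine (hY.clm_apply hinner).congr_deriv ?_
  rw [hYZf]
  rfl

/-- The propagator `Y t * Z s` given by a fundamental solution `Y` with inverse `Z` on `[c, d]`;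
times outside `[c, d]` are clamped to it, and the value is `Y s * Z s` for `t ≤ s`. -/
noncomputable def fundamentalPropagator (hcd : c ≤ d) (Y Z : ℝ → X →L[ℝ] X) (t s : ℝ) : X →L[ℝ] X :=
  Y (projIcc c d hcd (max t s)) * Z (projIcc c d hcd s)

section FundamentalPropagator

variable {hcd : c ≤ d} {Y Z : ℝ → X →L[ℝ] X} {s t : ℝ}

lemma fundamentalPropagator_of_le (hst : s ≤ t) :
    fundamentalPropagator hcd Y Z t s = Y (projIcc c d hcd t) * Z (projIcc c d hcd s) := by
  rw [fundamentalPropagator, max_eq_left hst]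

lemma fundamentalPropagator_of_mem (hs : s ∈ Icc c d) (ht : t ∈ Icc s d) :
    fundamentalPropagator hcd Y Z t s = Y t * Z s := by
  rw [fundamentalPropagator_of_le ht.1, projIcc_of_mem hcd hs,
    projIcc_of_mem hcd ⟨hs.1.trans ht.1, ht.2⟩]

lemma fundamentalPropagator_projIcc (t s : ℝ) :
    fundamentalPropagator hcd Y Z (projIcc c d hcd t) (projIcc c d hcd s) =
      fundamentalPropagator hcd Y Z t s := by
  have hmax : max (projIcc c d hcd t : ℝ) (projIcc c d hcd s) = projIcc c d hcd (max t s) := by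
    rw [(monotone_projIcc hcd).map_max]
    rfl
  simp only [fundamentalPropagator, hmax, projIcc_val]

lemma fundamentalPropagator_add_integral [CompleteSpace X] (hs : s ∈ Icc c d) (ht : t ∈ Icc s d)
    (hZ : Continuous Z) {f : ℝ → X} (hf : Continuous f) (y : X) :
    fundamentalPropagator hcd Y Z t s y + ∫ r in s..t, fundamentalPropagator hcd Y Z t r (f r) =
      Y t (Z s y + ∫ r in s..t, Z r (f r)) := by
  have hZf : IntervalIntegrable (fun r => Z r (f r)) volume s t :=
    (hZ.clm_apply hf).intervalIntegrable _ _
  rw [map_add, ← (Y t).intervalIntegral_comp_comm hZf, fundamentalPropagator_of_mem hs ht]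
  refine congrArg _ (intervalIntegral.integral_congr fun r hr => ?_)
  rw [uIcc_of_le ht.1] at hr
  exact DFunLike.congr_fun (fundamentalPropagator_of_mem
    ⟨hs.1.trans hr.1, hr.2.trans ht.2⟩ ⟨hr.2, ht.2⟩) (f r)

end FundamentalPropagator

lemma exists_isPropagatorOf [CompleteSpace X] {M : ℝ} (ha : Continuous a) (haM : ∀ t, ‖a t‖ ≤ M)
    (hdiss : ∀ t, IsDissipative (a t)) (hcd : c ≤ d) : ∃ Φ, IsPropagatorOf a c d Φ := by
  obtain ⟨Y, Z, hY, hZ, hYderiv, hZY, hYZ⟩ := exists_fundamental_pair ha haM hcd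
  let Φ := fundamentalPropagator hcd Y Z
  have hduhamel {s : ℝ} (hs : s ∈ Icc c d) {f : ℝ → X} (hf : Continuous f) (y : X)
      (t : ℝ) (ht : t ∈ Icc s d) : HasDerivWithinAt (fun t => Φ t s y + ∫ r in s..t, Φ t r (f r))
        (a t (Φ t s y + ∫ r in s..t, Φ t r (f r)) + f t) (Icc s d) t := by
    have htcd : t ∈ Icc c d := ⟨hs.1.trans ht.1, ht.2⟩
    rw [fundamentalPropagator_add_integral hs ht hZ hf]
    exact (hasDerivAt_duhamel (hYderiv t htcd) hZ (hYZ t htcd) s hf (Z s y)).hasDerivWithinAt.congr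
      (fun r hr => fundamentalPropagator_add_integral hs hr hZ hf y)
      (fundamentalPropagator_add_integral hs ht hZ hf y)
  have hone {t s : ℝ} (hts : t ≤ s) : Φ t s = 1 := by
    simp only [Φ, fundamentalPropagator, max_eq_right hts, hYZ _ (projIcc c d hcd s).2]
  have hnorm (t s : ℝ) : ‖Φ t s‖ ≤ 1 := by
    refine ContinuousLinearMap.opNorm_le_bound _ zero_le_one fun y => ?_
    rcases le_total t s with hts | hst
    · simp [hone hts]
    have hs := (projIcc c d hcd s).2
    have ht := (projIcc c d hcd t).2
    have h := norm_le_of_hasDerivWithinAt_dissipative (u := fun r => Φ r (projIcc c d hcd s) y)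
      (f := 0) (ε := 0) (monotone_projIcc hcd hst) hdiss (fun r hr => ?_) (by simp)
    · simpa [Φ, hone le_rfl, fundamentalPropagator_projIcc] using h
    simpa using (hduhamel hs (continuous_const (y := (0 : X))) y r ⟨hr.1, hr.2.trans ht.2⟩).mono
      (Icc_subset_Icc_right ht.2)
  have hcont : Continuous fun q : ℝ × ℝ => Φ q.1 q.2 := by
    have hp : Continuous fun t => (projIcc c d hcd t : ℝ) :=
      continuous_subtype_val.comp continuous_projIcc
    exact (hY.comp (hp.comp (continuous_fst.max continuous_snd))).mul
      (hZ.comp (hp.comp continuous_snd))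
  refine ⟨Φ, ⟨hnorm, fun x => hcont.clm_apply continuous_const, hone, fun {t r s} hsr hrt x => ?_⟩,
    fun _ => fundamentalPropagator_projIcc, hduhamel⟩
  simp only [Φ, fundamentalPropagator_of_le hsr, fundamentalPropagator_of_le hrt,
    fundamentalPropagator_of_le (hsr.trans hrt)]
  exact congrArg (Y _) (DFunLike.congr_fun (hZY _ (projIcc c d hcd r).2) (Z _ x))

end Propagators

section DissipativeExponential

variable {X : Type*} [NormedAddCommGroup X] [NormedSpace ℝ X] [CompleteSpace X]
  {a b : X →L[ℝ] X} {τ : ℝ}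

lemma hasDerivAt_exp_smul_apply (a : X →L[ℝ] X) (x : X) (r : ℝ) :
    HasDerivAt (fun r : ℝ => NormedSpace.exp (r • a) x) (a (NormedSpace.exp (r • a) x)) r := by
  simpa using (hasDerivAt_exp_smul_const' (𝕂 := ℝ) a r).clm_apply (hasDerivAt_const r x)

lemma IsDissipative.norm_exp_smul_apply_le (ha : IsDissipative a) (hτ : 0 ≤ τ) (x : X) :
    ‖NormedSpace.exp (τ • a) x‖ ≤ ‖x‖ := by
  have h := norm_le_of_hasDerivWithinAt_dissipative (f := 0) (ε := 0) hτ (fun _ => ha)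
    (fun r _ => (by simpa using (hasDerivAt_exp_smul_apply a x r).hasDerivWithinAt)) (by simp)
  simpa using h

lemma IsDissipative.norm_exp_smul_sub_exp_smul_le (ha : IsDissipative a) (hb : IsDissipative b)
    (hab : Commute a b) (hτ : 0 ≤ τ) (x : X) :
    ‖NormedSpace.exp (τ • a) x - NormedSpace.exp (τ • b) x‖ ≤ τ * ‖a x - b x‖ := by
  have hcomm (r : ℝ) (c : X →L[ℝ] X) (hc : Commute c b) (x : X) :
      c (NormedSpace.exp (r • b) x) = NormedSpace.exp (r • b) (c x) :=
    DFunLike.congr_fun (hc.smul_right r).exp_right.eq x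
  have h := norm_le_of_hasDerivWithinAt_dissipative (s := 0) (t := τ)
    (u := fun r : ℝ => NormedSpace.exp (r • a) x - NormedSpace.exp (r • b) x)
    (f := fun r : ℝ => NormedSpace.exp (r • b) (a x - b x)) hτ (fun _ => ha) (fun r _ => ?_)
    (fun r hr => hb.norm_exp_smul_apply_le hr.1 _)
  · simpa [mul_comm] using h
  refine ((hasDerivAt_exp_smul_apply a x r).sub
    (hasDerivAt_exp_smul_apply b x r)).hasDerivWithinAt.congr_deriv ?_
  rw [map_sub, map_sub, hcomm r a hab, hcomm r b (Commute.refl b)]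
  abel

end DissipativeExponential

section Yosida

variable {X : Type*} [NormedAddCommGroup X] [NormedSpace ℝ X] {R : X →L[ℝ] X} {lam μ : ℝ}

/-- `R` is the bounded inverse of a maximally dissipative operator `A`: the two conditions are
dissipativity of `A` and surjectivity of `lam - A`, written at `x = R y`, `A x = y`. -/
structure IsMaxDissipativeInverse (R : X →L[ℝ] X) : Prop where
  dissipative : ∀ lam : ℝ, 0 < lam → ∀ y, lam * ‖R y‖ ≤ ‖lam • R y - y‖
  surjective : ∃ lam : ℝ, 0 < lam ∧ ∀ z, ∃ y, lam • R y - y = z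

/-- The Yosida approximation `lam A (lam - A)⁻¹` of `A = R⁻¹`. In terms of `R` it is
`lam (lam R - 1)⁻¹`, and `R * yosida R lam` is the scaled resolvent `lam (lam - A)⁻¹`. -/
noncomputable def yosida (R : X →L[ℝ] X) (lam : ℝ) : X →L[ℝ] X :=
  lam • Ring.inverse (lam • R - 1)

lemma commute_yosida (R : X →L[ℝ] X) (lam μ : ℝ) : Commute (yosida R lam) (yosida R μ) := by
  have h : Commute (lam • R - 1) (μ • R - 1) :=
    ((((Commute.refl R).smul_left lam).smul_right μ).sub_left
      (Commute.one_left _)).sub_right (Commute.one_right _)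
  exact (h.ringInverse_ringInverse.smul_left lam).smul_right μ

namespace IsMaxDissipativeInverse

lemma norm_mul_inverse_le (hR : IsMaxDissipativeInverse R) (hlam : 0 < lam)
    (hunit : IsUnit (lam • R - 1)) : ‖R * Ring.inverse (lam • R - 1)‖ ≤ lam⁻¹ := by
  refine ContinuousLinearMap.opNorm_le_bound _ (inv_pos.2 hlam).le fun z => ?_
  have hinv : (lam • R - 1) (Ring.inverse (lam • R - 1) z) = z :=
    DFunLike.congr_fun (Ring.mul_inverse_cancel _ hunit) z
  have h := hR.dissipative lam hlam (Ring.inverse (lam • R - 1) z)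
  rw [← le_inv_mul_iff₀ hlam] at h
  exact h.trans_eq (congrArg (lam⁻¹ * ‖·‖) hinv)

variable [CompleteSpace X]

lemma isUnit_smul_sub_one_of_lt_two_mul (hR : IsMaxDissipativeInverse R) (hlam : 0 < lam)
    (hunit : IsUnit (lam • R - 1)) (hμ : 0 < μ) (hμlam : μ < 2 * lam) :
    IsUnit (μ • R - 1) := by
  have hfactor : μ • R - 1 =
      (1 - (lam - μ) • (R * Ring.inverse (lam • R - 1))) * (lam • R - 1) := by
    rw [sub_mul, one_mul, smul_mul_assoc, mul_assoc, Ring.inverse_mul_cancel _ hunit, mul_one]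
    module
  rw [hfactor]
  refine (isUnit_one_sub_of_norm_lt_one ?_).mul hunit
  calc ‖(lam - μ) • (R * Ring.inverse (lam • R - 1))‖ ≤ |lam - μ| * lam⁻¹ := by
        rw [norm_smul, Real.norm_eq_abs]
        exact mul_le_mul_of_nonneg_left (hR.norm_mul_inverse_le hlam hunit) (abs_nonneg _)
    _ < 1 := by
        rw [← div_eq_mul_inv, div_lt_one hlam, abs_lt]
        constructor <;> linarith

lemma isUnit_smul_sub_one (hR : IsMaxDissipativeInverse R) (hlam : 0 < lam) :
    IsUnit (lam • R - 1) := by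
  obtain ⟨μ, hμ, hsurj⟩ := hR.surjective
  have hinj : Function.Injective (μ • R - 1 : X →L[ℝ] X) := by
    refine (injective_iff_map_eq_zero _).2 fun y hy => ?_
    have hy' : μ • R y - y = 0 := hy
    have h := hR.dissipative μ hμ y
    rw [hy', norm_zero] at h
    have hRy : R y = 0 := norm_le_zero_iff.1 (nonpos_of_mul_nonpos_right h hμ)
    simpa [hRy] using hy'
  have hunit : IsUnit (μ • R - 1) := ContinuousLinearMap.isUnit_iff_bijective.2 ⟨hinj, hsurj⟩
  have hgrow (k : ℕ) : ∀ lam, 0 < lam → lam ≤ (3 / 2 : ℝ) ^ k * μ → IsUnit (lam • R - 1) := by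
    induction k with
    | zero => exact fun lam hlam hle =>
        hR.isUnit_smul_sub_one_of_lt_two_mul hμ hunit hlam (by linarith)
    | succ k ih =>
      refine fun lam hlam hle => hR.isUnit_smul_sub_one_of_lt_two_mul (lam := 2 / 3 * lam)
        (by positivity) (ih _ (by positivity) ?_) hlam (by linarith)
      rw [pow_succ] at hle
      linarith
  obtain ⟨k, hk⟩ := pow_unbounded_of_one_lt (lam / μ) (by norm_num : (1 : ℝ) < 3 / 2)
  exact hgrow k lam hlam ((div_lt_iff₀ hμ).1 hk).le

lemma apply_yosida (hR : IsMaxDissipativeInverse R) (hlam : 0 < lam) (x : X) :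
    R (yosida R lam x) = x + lam⁻¹ • yosida R lam x := by
  have h : lam • R (Ring.inverse (lam • R - 1) x) - Ring.inverse (lam • R - 1) x = x :=
    DFunLike.congr_fun (Ring.mul_inverse_cancel _ (hR.isUnit_smul_sub_one hlam)) x
  simp only [yosida, smul_apply, map_smul, inv_smul_smul₀ hlam.ne']
  exact sub_eq_iff_eq_add.1 h

lemma yosida_apply_comm (hR : IsMaxDissipativeInverse R) (hlam : 0 < lam) (x : X) :
    yosida R lam (R x) = R (yosida R lam x) := by
  have h : Ring.inverse (lam • R - 1) (lam • R x - x) = x :=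
    DFunLike.congr_fun (Ring.inverse_mul_cancel _ (hR.isUnit_smul_sub_one hlam)) x
  rw [hR.apply_yosida hlam]
  simp only [yosida, smul_apply, inv_smul_smul₀ hlam.ne']
  rwa [map_sub, map_smul, sub_eq_iff_eq_add] at h

lemma norm_apply_yosida_le (hR : IsMaxDissipativeInverse R) (hlam : 0 < lam) (x : X) :
    ‖R (yosida R lam x)‖ ≤ ‖x‖ := by
  have h := hR.dissipative lam hlam (yosida R lam x)
  rw [hR.apply_yosida hlam, smul_add, smul_inv_smul₀ hlam.ne', add_sub_cancel_right, norm_smul,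
    Real.norm_of_nonneg hlam.le] at h
  rw [hR.apply_yosida hlam]
  exact le_of_mul_le_mul_left h hlam

lemma yosida_apply_eq (hR : IsMaxDissipativeInverse R) (hlam : 0 < lam) (x : X) :
    yosida R lam x = lam • (R (yosida R lam x) - x) := by
  rw [hR.apply_yosida hlam, add_sub_cancel_left, smul_inv_smul₀ hlam.ne']

lemma yosida_sub_yosida {R' : X →L[ℝ] X} (hR : IsMaxDissipativeInverse R)
    (hR' : IsMaxDissipativeInverse R') (hlam : 0 < lam) :
    yosida R lam - yosida R' lam = yosida R lam * (R' - R) * yosida R' lam := by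
  ext x
  simp only [sub_apply, mul_apply_eq_comp, map_sub, hR.yosida_apply_comm hlam,
    hR'.apply_yosida hlam, hR.apply_yosida hlam, map_add, map_smul]
  abel

lemma norm_yosida_le (hR : IsMaxDissipativeInverse R) (hlam : 0 < lam) :
    ‖yosida R lam‖ ≤ 2 * lam := by
  refine ContinuousLinearMap.opNorm_le_bound _ (by positivity) fun x => ?_
  rw [hR.yosida_apply_eq hlam, norm_smul, Real.norm_of_nonneg hlam.le, mul_comm 2, mul_assoc]
  gcongr
  linarith [norm_sub_le (R (yosida R lam x)) x, hR.norm_apply_yosida_le hlam x]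

lemma isDissipative_yosida (hR : IsMaxDissipativeInverse R) (hlam : 0 < lam) :
    IsDissipative (yosida R lam) := by
  intro μ hμ x
  have heq : μ • x - yosida R lam x = (μ + lam) • x - lam • R (yosida R lam x) := by
    rw [hR.apply_yosida hlam, smul_add, smul_inv_smul₀ hlam.ne', add_smul]
    abel
  have h := norm_sub_norm_le ((μ + lam) • x) (lam • R (yosida R lam x))
  rw [norm_smul, norm_smul, Real.norm_of_nonneg hlam.le, Real.norm_of_nonneg (by positivity)] at h
  rw [heq]
  linarith [mul_le_mul_of_nonneg_left (hR.norm_apply_yosida_le hlam x) hlam.le]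

lemma tendsto_apply_yosida (hR : IsMaxDissipativeInverse R) (hdense : DenseRange R) (x : X) :
    Tendsto (fun n : ℕ => R (yosida R (n + 1) x)) atTop (𝓝 x) := by
  have hpos (n : ℕ) : (0 : ℝ) < n + 1 := n.cast_add_one_pos
  refine tendsto_clm_apply_of_dense (T := fun n : ℕ => R * yosida R (n + 1))
    (T' := 1) hdense (M := 1) (fun n => ?_) ?_ x
  · exact ContinuousLinearMap.opNorm_le_bound _ zero_le_one fun x => by
      simpa using hR.norm_apply_yosida_le (hpos n) x
  rintro _ ⟨y, rfl⟩
  have hzero : Tendsto (fun n : ℕ => 1 / ((n : ℝ) + 1) * ‖y‖) atTop (𝓝 0) := by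
    simpa using tendsto_one_div_add_atTop_nhds_zero_nat.mul_const ‖y‖
  refine tendsto_iff_norm_sub_tendsto_zero.2
    (squeeze_zero (fun _ => norm_nonneg _) (fun n => ?_) hzero)
  rw [mul_apply_eq_comp, one_apply_eq_self, hR.apply_yosida (hpos n), add_sub_cancel_left,
    norm_smul, one_div, norm_inv, Real.norm_of_nonneg (hpos n).le, hR.yosida_apply_comm (hpos n)]
  gcongr
  exact hR.norm_apply_yosida_le (hpos n) y

lemma cauchySeq_exp_yosida (hR : IsMaxDissipativeInverse R) (hdense : DenseRange R) {τ : ℝ}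
    (hτ : 0 ≤ τ) (x : X) :
    CauchySeq fun n : ℕ => NormedSpace.exp (τ • yosida R (n + 1)) x := by
  have hpos (n : ℕ) : (0 : ℝ) < n + 1 := n.cast_add_one_pos
  have hdiss (n : ℕ) : IsDissipative (yosida R (n + 1)) := hR.isDissipative_yosida (hpos n)
  refine cauchySeq_clm_apply_of_dense (T := fun n : ℕ => NormedSpace.exp (τ • yosida R (n + 1)))
    hdense (M := 1) (fun n => ?_) ?_ x
  · exact ContinuousLinearMap.opNorm_le_bound _ zero_le_one fun x => by
      simpa using (hdiss n).norm_exp_smul_apply_le hτ x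
  rintro _ ⟨y, rfl⟩
  have hscaled : CauchySeq fun n : ℕ => τ • R (yosida R (n + 1) y) :=
    ((hR.tendsto_apply_yosida hdense y).const_smul τ).cauchySeq
  rw [Metric.cauchySeq_iff] at hscaled ⊢
  intro ε hε
  obtain ⟨N, hN⟩ := hscaled ε hε
  refine ⟨N, fun m hm n hn => lt_of_le_of_lt ?_ (hN m hm n hn)⟩
  rw [dist_eq_norm, dist_eq_norm, ← smul_sub, norm_smul, Real.norm_of_nonneg hτ]
  simpa only [hR.yosida_apply_comm (hpos _)] using
    (hdiss m).norm_exp_smul_sub_exp_smul_le (hdiss n) (commute_yosida R _ _) hτ (R y)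

end IsMaxDissipativeInverse

lemma continuous_yosida [CompleteSpace X] {R : ℝ → X →L[ℝ] X} (hRc : Continuous R)
    (hR : ∀ t, IsMaxDissipativeInverse (R t)) (hlam : 0 < lam) :
    Continuous fun t => yosida (R t) lam := by
  refine continuous_iff_continuousAt.2 fun t => ContinuousAt.const_smul ?_ lam
  obtain ⟨unit, hunit⟩ := (hR t).isUnit_smul_sub_one hlam
  have hinv : ContinuousAt Ring.inverse (lam • R t - 1) :=
    hunit ▸ NormedRing.inverse_continuousAt unit
  exact hinv.comp (f := fun t => lam • R t - 1) (by fun_prop)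

end Yosida

section MildSolutions

variable {X : Type*} [NormedAddCommGroup X] [NormedSpace ℝ X] {U : ℝ → ℝ → X →L[ℝ] X}
  {B : ℝ → X →L[ℝ] X} {K s d : ℝ} {y : X} {w : ℝ → X}

/-- `w` is a mild solution on `[s, d]` of the bounded perturbation `w' = a w + B w`, `w s = y`, of
the equation `u' = a u` with propagator `U`: it solves the variation of constants equation. -/
structure IsMildSolution (U : ℝ → ℝ → X →L[ℝ] X) (B : ℝ → X →L[ℝ] X) (s d : ℝ) (y : X)
    (w : ℝ → X) : Prop where
  continuous : Continuous w
  eq_add_integral : ∀ t ∈ Icc s d, w t = U t s y + ∫ r in s..t, U t r (B r (w r))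

lemma norm_propagator_mul_le (hU : ∀ t s, ‖U t s‖ ≤ 1) (hB : ∀ t, ‖B t‖ ≤ K) (t r : ℝ) :
    ‖U t r * B r‖ ≤ K := by
  simpa using (norm_mul_le _ _).trans
    (mul_le_mul (hU t r) (hB r) (norm_nonneg _) zero_le_one)

namespace IsContractionPropagator

lemma continuous_propagator_mul (hU : IsContractionPropagator U)
    (hBc : ∀ x, Continuous fun t => B t x) (x : X) :
    Continuous fun q : ℝ × ℝ => (U q.1 q.2 * B q.2) x :=
  continuous_clm_apply_of_norm_le (T := fun q : ℝ × ℝ => U q.1 q.2) (fun _ => hU.norm_le_one _ _)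
    hU.continuous_apply ((hBc x).comp continuous_snd)

lemma continuous_left (hU : IsContractionPropagator U) (s : ℝ) (x : X) :
    Continuous fun t => U t s x :=
  (hU.continuous_apply x).comp (by fun_prop : Continuous fun t : ℝ => (t, s))

lemma exists_isMildSolution [CompleteSpace X] (hU : IsContractionPropagator U)
    (hB : ∀ t, ‖B t‖ ≤ K) (hBc : ∀ x, Continuous fun t => B t x) (hsd : s ≤ d) (y : X) :
    ∃ w, IsMildSolution U B s d y w := by
  have hkK := norm_propagator_mul_le hU.norm_le_one hB
  obtain ⟨w, hw, hweq⟩ := exists_volterra_solution (k := fun t r x => (U t r * B r) x)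
    (continuous_kernel_uncurry hkK (hU.continuous_propagator_mul hBc))
    ((norm_nonneg _).trans (hB 0))
    (fun t r x x' => by rw [← map_sub]; exact (U t r * B r).le_of_opNorm_le (hkK t r) _)
    (hU.continuous_left s y) hsd
  exact ⟨w, hw, hweq⟩

end IsContractionPropagator

namespace IsMildSolution

lemma norm_le (hw : IsMildSolution U B s d y w) (hU : IsContractionPropagator U)
    (hB : ∀ t, ‖B t‖ ≤ K) {t : ℝ} (ht : t ∈ Icc s d) : ‖w t‖ ≤ ‖y‖ * exp (K * (t - s)) :=
  norm_volterra_solution_le (norm_propagator_mul_le hU.norm_le_one hB)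
    (fun t _ => hU.norm_apply_le t s y) hw.continuous hw.eq_add_integral t ht

lemma tendsto {Uₙ : ℕ → ℝ → ℝ → X →L[ℝ] X} {wₙ : ℕ → ℝ → X}
    (hwₙ : ∀ n, IsMildSolution (Uₙ n) B s d y (wₙ n)) (hw : IsMildSolution U B s d y w)
    (hUₙ : ∀ n, IsContractionPropagator (Uₙ n))
    (hU : ∀ t r x, Tendsto (fun n => Uₙ n t r x) atTop (𝓝 (U t r x)))
    (hB : ∀ t, ‖B t‖ ≤ K) (hBc : ∀ x, Continuous fun t => B t x) {t : ℝ} (ht : t ∈ Icc s d) :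
    Tendsto (fun n => wₙ n t) atTop (𝓝 (w t)) :=
  tendsto_volterra_solution (kₙ := fun n t r => Uₙ n t r * B r) (k := fun t r => U t r * B r)
    (gₙ := fun n t => Uₙ n t s y) (C := ‖y‖)
    (fun n => norm_propagator_mul_le (hUₙ n).norm_le_one hB)
    (fun n => (hUₙ n).continuous_propagator_mul hBc) (fun t r x => hU t r (B r x))
    (fun n => (hUₙ n).continuous_left s y) (fun n t => (hUₙ n).norm_apply_le t s y)
    (fun t => hU t s y) (fun n => (hwₙ n).continuous) hw.continuous
    (fun n => (hwₙ n).eq_add_integral) hw.eq_add_integral t ht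

lemma hasDerivWithinAt {a : ℝ → X →L[ℝ] X} {c : ℝ} (hw : IsMildSolution U B s d y w)
    (hU : IsPropagatorOf a c d U) (hB : ∀ t, ‖B t‖ ≤ K) (hBc : ∀ x, Continuous fun t => B t x)
    (hs : s ∈ Icc c d) {t : ℝ} (ht : t ∈ Icc s d) :
    HasDerivWithinAt w (a t (w t) + B t (w t)) (Icc s d) t := by
  have h := hU.duhamel hs (continuous_clm_apply_of_norm_le hB hBc hw.continuous) y t ht
  rw [← hw.eq_add_integral t ht] at h
  exact h.congr hw.eq_add_integral (hw.eq_add_integral t ht)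

end IsMildSolution

end MildSolutions

section KatoFamilies

variable {X : Type*} [NormedAddCommGroup X] [NormedSpace ℝ X] {R B : ℝ → X →L[ℝ] X}
  {C : ℝ → ℝ → X →L[ℝ] X} {K c d lam : ℝ}

/-- The bounded operators attached to a family `A t` on `[c, d]` with common dense domain:
the inverses `R t = (A t)⁻¹`, the ratios `C t s = A t (A s)⁻¹`, and the strong limits `B t` of
`(τ - t)⁻¹ (C τ t - 1)` as `τ → t`. All families are defined for all real times; only the last
condition is confined to `[c, d]`, so that constant extensions from `[c, d]` are allowed. -/
structure IsKatoFamily (R : ℝ → X →L[ℝ] X) (C : ℝ → ℝ → X →L[ℝ] X) (B : ℝ → X →L[ℝ] X)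
    (K c d : ℝ) : Prop where
  isMaxDissipativeInverse : ∀ t, IsMaxDissipativeInverse (R t)
  denseRange : ∀ t, DenseRange (R t)
  apply_ratio : ∀ t s x, R t (C t s x) = R s x
  norm_ratio_sub_one_le : ∀ t s, ‖C t s - 1‖ ≤ K * |t - s|
  norm_limit_le : ∀ t, ‖B t‖ ≤ K
  continuous_limit : ∀ x, Continuous fun t => B t x
  tendsto_limit : ∀ x, ∀ t ∈ Icc c d,
    Tendsto (fun τ => (τ - t)⁻¹ • (C τ t x - x)) (𝓝[Icc c d \ {t}] t) (𝓝 (B t x))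

namespace IsKatoFamily

lemma nonneg (hR : IsKatoFamily R C B K c d) : 0 ≤ K :=
  (norm_nonneg _).trans (hR.norm_limit_le 0)

lemma sub_eq_mul_ratio_sub_one (hR : IsKatoFamily R C B K c d) (t s : ℝ) :
    R t - R s = R s * (C s t - 1) := by
  ext x
  simp only [sub_apply, mul_apply_eq_comp, one_apply_eq_self, map_sub, hR.apply_ratio]

lemma continuous_inverse (hR : IsKatoFamily R C B K c d) : Continuous R := by
  refine continuous_iff_continuousAt.2 fun s => tendsto_iff_norm_sub_tendsto_zero.2 ?_
  have hzero : Tendsto (fun t => ‖R s‖ * (K * |s - t|)) (𝓝 s) (𝓝 0) := by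
    have hcont : Continuous fun t => ‖R s‖ * (K * |s - t|) := by fun_prop
    simpa using hcont.tendsto s
  refine squeeze_zero (fun _ => norm_nonneg _) (fun t => ?_) hzero
  rw [hR.sub_eq_mul_ratio_sub_one]
  exact (norm_mul_le _ _).trans
    (mul_le_mul_of_nonneg_left (hR.norm_ratio_sub_one_le s t) (norm_nonneg _))

lemma hasDerivWithinAt_inverse_apply (hR : IsKatoFamily R C B K c d) {S : Set ℝ}
    (hS : S ⊆ Icc c d) {w : ℝ → X} {w' : X} {t : ℝ} (ht : t ∈ S)
    (hw : HasDerivWithinAt w w' S t) :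
    HasDerivWithinAt (fun t => R t (w t)) (R t w' - R t (B t (w t))) S t := by
  rw [hasDerivWithinAt_iff_tendsto_slope] at hw ⊢
  have hRc : Tendsto R (𝓝[S \ {t}] t) (𝓝 (R t)) :=
    hR.continuous_inverse.continuousAt.tendsto.mono_left nhdsWithin_le_nhds
  have hB := (hR.tendsto_limit (w t) t (hS ht)).mono_left
    (nhdsWithin_mono t (sdiff_subset_sdiff_left hS))
  have happly {f : ℝ → X} {x : X} (hf : Tendsto f (𝓝[S \ {t}] t) (𝓝 x)) :
      Tendsto (fun τ => R τ (f τ)) (𝓝[S \ {t}] t) (𝓝 (R t x)) :=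
    (isBoundedBilinearMap_apply.continuous.tendsto (R t, x)).comp (hRc.prodMk_nhds hf)
  refine ((happly hw).sub (happly hB)).congr fun τ => ?_
  simp only [slope_def_module, map_smul, ← smul_sub, map_sub, hR.apply_ratio]
  congr 1
  abel

lemma norm_mildSolution_le (hR : IsKatoFamily R C B K c d) {U : ℝ → ℝ → X →L[ℝ] X}
    (hU : IsContractionPropagator U) {s t : ℝ} (hs : s ∈ Icc c d) {y : X} {w : ℝ → X}
    (hw : IsMildSolution U B s d y w) (ht : t ∈ Icc s d) :
    ‖w t‖ ≤ ‖y‖ * exp (K * (d - c)) := by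
  refine (hw.norm_le hU hR.norm_limit_le ht).trans ?_
  have hK := hR.nonneg
  have hts : t - s ≤ d - c := sub_le_sub ht.2 hs.1
  gcongr

lemma norm_ratio_le (hR : IsKatoFamily R C B K c d) {t s : ℝ} (ht : t ∈ Icc c d)
    (hs : s ∈ Icc c d) : ‖C t s‖ ≤ 1 + K * (d - c) := by
  have hts : |t - s| ≤ d - c := abs_sub_le_of_le_of_le ht.1 ht.2 hs.1 hs.2
  calc ‖C t s‖ = ‖1 + (C t s - 1)‖ := by rw [add_sub_cancel]
    _ ≤ 1 + K * |t - s| :=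
        norm_add_le_of_le ContinuousLinearMap.norm_id_le (hR.norm_ratio_sub_one_le t s)
    _ ≤ 1 + K * (d - c) := by
        have hK := hR.nonneg
        gcongr

variable [CompleteSpace X]

lemma continuous_yosida (hR : IsKatoFamily R C B K c d) (hlam : 0 < lam) :
    Continuous fun t => yosida (R t) lam :=
  _root_.continuous_yosida hR.continuous_inverse hR.isMaxDissipativeInverse hlam

lemma exists_isPropagatorOf_yosida (hR : IsKatoFamily R C B K c d) (hlam : 0 < lam)
    (hcd : c ≤ d) : ∃ Φ, IsPropagatorOf (fun t => yosida (R t) lam) c d Φ :=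
  exists_isPropagatorOf (hR.continuous_yosida hlam)
    (fun t => (hR.isMaxDissipativeInverse t).norm_yosida_le hlam)
    (fun t => (hR.isMaxDissipativeInverse t).isDissipative_yosida hlam) hcd

lemma norm_yosida_sub_yosida_apply_le (hR : IsKatoFamily R C B K c d) (hlam : 0 < lam) (t s : ℝ)
    (y : X) : ‖yosida (R t) lam (R s y) - yosida (R s) lam (R s y)‖ ≤ K * |t - s| * ‖y‖ := by
  have hmax := hR.isMaxDissipativeInverse
  have heq : yosida (R t) lam (R s y) - yosida (R s) lam (R s y) =
      R t (yosida (R t) lam ((C t s - 1) (R s (yosida (R s) lam y)))) := by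
    rw [← sub_apply, (hmax t).yosida_sub_yosida (hmax s) hlam, hR.sub_eq_mul_ratio_sub_one]
    simp only [mul_apply_eq_comp, (hmax _).yosida_apply_comm hlam]
  rw [heq]
  exact ((hmax t).norm_apply_yosida_le hlam _).trans <|
    ((C t s - 1).le_of_opNorm_le (hR.norm_ratio_sub_one_le t s) _).trans <|
    mul_le_mul_of_nonneg_left ((hmax s).norm_apply_yosida_le hlam y)
      (mul_nonneg hR.nonneg (abs_nonneg _))

lemma inverse_apply_mildSolution (hR : IsKatoFamily R C B K c d) (hlam : 0 < lam)
    {Φ : ℝ → ℝ → X →L[ℝ] X} (hΦ : IsPropagatorOf (fun t => yosida (R t) lam) c d Φ) {s t : ℝ}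
    (hs : s ∈ Icc c d) {y : X} {w : ℝ → X} (hw : IsMildSolution Φ B s d y w) (ht : t ∈ Icc s d) :
    R t (w t) = Φ t s (R s y) := by
  have hmax := hR.isMaxDissipativeInverse
  have hws : w s = y := by
    simpa [hΦ.eq_one le_rfl] using hw.eq_add_integral s (left_mem_Icc.2 (ht.1.trans ht.2))
  have h := norm_le_of_hasDerivWithinAt_dissipative (u := fun r => R r (w r) - Φ r s (R s y))
    (f := 0) (ε := 0) ht.1 (fun r => (hmax r).isDissipative_yosida hlam) (fun r hr => ?_) (by simp)
  · simpa [hws, hΦ.eq_one le_rfl, sub_eq_zero] using h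
  have hr' : r ∈ Icc s d := ⟨hr.1, hr.2.trans ht.2⟩
  refine (((hR.hasDerivWithinAt_inverse_apply (Icc_subset_Icc_left hs.1) hr'
    (hw.hasDerivWithinAt hΦ hR.norm_limit_le hR.continuous_limit hs hr')).sub
    (hΦ.hasDerivWithinAt hs (R s y) hr')).mono (Icc_subset_Icc_right ht.2)).congr_deriv ?_
  simp only [map_add, map_sub, add_sub_cancel_right, (hmax r).yosida_apply_comm hlam,
    Pi.zero_apply, add_zero]

lemma hasDerivWithinAt_propagator_inverse (hR : IsKatoFamily R C B K c d) (hlam : 0 < lam)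
    {Φ : ℝ → ℝ → X →L[ℝ] X} (hΦ : IsPropagatorOf (fun t => yosida (R t) lam) c d Φ) {s t : ℝ}
    (hs : s ∈ Icc c d) {y : X} {w : ℝ → X} (hw : IsMildSolution Φ B s d y w) (ht : t ∈ Icc s d) :
    HasDerivWithinAt (fun t => Φ t s (R s y)) (R t (yosida (R t) lam (w t))) (Icc s d) t := by
  refine (hΦ.hasDerivWithinAt hs (R s y) ht).congr_deriv ?_
  rw [← hR.inverse_apply_mildSolution hlam hΦ hs hw ht,
    (hR.isMaxDissipativeInverse t).yosida_apply_comm hlam]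

lemma exists_lipschitzWith_propagator (hR : IsKatoFamily R C B K c d) (hcd : c ≤ d) (y : X) :
    ∃ Λ : NNReal, ∀ lam > 0, ∀ Φ, IsPropagatorOf (fun t => yosida (R t) lam) c d Φ →
      ∀ s, LipschitzWith Λ fun t => Φ t s (R c y) := by
  have hΛ : 0 ≤ (1 + K * (d - c)) * ‖y‖ * exp (K * (d - c)) := by
    have hK := hR.nonneg
    have _hdc := sub_nonneg.2 hcd
    positivity
  refine ⟨Real.toNNReal ((1 + K * (d - c)) * ‖y‖ * exp (K * (d - c))), fun lam hlam Φ hΦ =>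
    hΦ.lipschitzWith_of_lipschitzOnWith hcd fun s hs => ?_⟩
  obtain ⟨w, hw⟩ := hΦ.exists_isMildSolution hR.norm_limit_le hR.continuous_limit hs.2 (C s c y)
  rw [← hR.apply_ratio s c y]
  refine (convex_Icc s d).lipschitzOnWith_of_nnnorm_hasDerivWithin_le
    (fun t ht => hR.hasDerivWithinAt_propagator_inverse hlam hΦ hs hw ht) fun t ht => ?_
  rw [← NNReal.coe_le_coe, coe_nnnorm, Real.coe_toNNReal _ hΛ]
  calc ‖R t (yosida (R t) lam (w t))‖ ≤ ‖w t‖ :=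
        (hR.isMaxDissipativeInverse t).norm_apply_yosida_le hlam _
    _ ≤ ‖C s c y‖ * exp (K * (d - c)) :=
        hR.norm_mildSolution_le hΦ.toIsContractionPropagator hs hw ht
    _ ≤ (1 + K * (d - c)) * ‖y‖ * exp (K * (d - c)) := by
        gcongr
        exact (C s c).le_of_opNorm_le (hR.norm_ratio_le hs (left_mem_Icc.2 hcd)) y

lemma norm_propagator_sub_exp_le (hR : IsKatoFamily R C B K c d) (hlam : 0 < lam)
    {Φ : ℝ → ℝ → X →L[ℝ] X} (hΦ : IsPropagatorOf (fun t => yosida (R t) lam) c d Φ) {s t : ℝ}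
    (hs : s ∈ Icc c d) (ht : t ∈ Icc s d) (y : X) :
    ‖Φ t s (R s y) - NormedSpace.exp ((t - s) • yosida (R s) lam) (R s y)‖ ≤
      K * (t - s) ^ 2 * ‖y‖ := by
  have hmax := hR.isMaxDissipativeInverse
  let E (r : ℝ) : X →L[ℝ] X := NormedSpace.exp ((r - s) • yosida (R s) lam)
  have hcomm (r : ℝ) (y : X) : E r (R s y) = R s (E r y) := by
    have hcommute : Commute (yosida (R s) lam) (R s) :=
      ContinuousLinearMap.ext ((hmax s).yosida_apply_comm hlam)
    exact DFunLike.congr_fun ((hcommute.smul_left (r - s)).exp_left).eq y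
  have hforce (r : ℝ) (hr : r ∈ Icc s t) :
      ‖yosida (R r) lam (E r (R s y)) - yosida (R s) lam (E r (R s y))‖ ≤ K * (t - s) * ‖y‖ := by
    rw [hcomm]
    refine (hR.norm_yosida_sub_yosida_apply_le hlam r s _).trans ?_
    have hK := hR.nonneg
    rw [abs_of_nonneg (sub_nonneg.2 hr.1)]
    have hE := ((hmax s).isDissipative_yosida hlam).norm_exp_smul_apply_le (sub_nonneg.2 hr.1) y
    have hrt : r - s ≤ t - s := sub_le_sub_right hr.2 s
    exact mul_le_mul (by gcongr) hE (norm_nonneg _)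
      (mul_nonneg hK (sub_nonneg.2 ht.1))
  have h := norm_le_of_hasDerivWithinAt_dissipative
    (u := fun r => Φ r s (R s y) - E r (R s y))
    (f := fun r => yosida (R r) lam (E r (R s y)) - yosida (R s) lam (E r (R s y))) ht.1
    (fun r => (hmax r).isDissipative_yosida hlam) (fun r hr => ?_) hforce
  · refine h.trans_eq ?_
    simp only [E, hΦ.eq_one le_rfl, sub_self, zero_smul, NormedSpace.exp_zero, norm_zero]
    ring
  have hE : HasDerivAt (fun r => E r (R s y)) (yosida (R s) lam (E r (R s y))) r :=
    (hasDerivAt_exp_smul_apply (yosida (R s) lam) (R s y) (r - s)).comp_sub_const r s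
  refine (((hΦ.hasDerivWithinAt hs (R s y) ⟨hr.1, hr.2.trans ht.2⟩).mono
    (Icc_subset_Icc_right ht.2)).sub hE.hasDerivWithinAt).congr_deriv ?_
  rw [map_sub]
  abel

end IsKatoFamily

end KatoFamilies

section YosidaLimit

lemma hasDerivWithinAt_of_tendsto_of_norm_le {E : Type*} [NormedAddCommGroup E] [NormedSpace ℝ E]
    [CompleteSpace E] {uₙ vₙ : ℕ → ℝ → E} {u v : ℝ → E} {M s d : ℝ}
    (hderiv : ∀ n, ∀ t ∈ Icc s d, HasDerivWithinAt (uₙ n) (vₙ n t) (Icc s d) t)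
    (hvₙ : ∀ n, ContinuousOn (vₙ n) (Icc s d)) (hM : ∀ n, ∀ t ∈ Icc s d, ‖vₙ n t‖ ≤ M)
    (hu : ∀ t ∈ Icc s d, Tendsto (fun n => uₙ n t) atTop (𝓝 (u t)))
    (hv : ∀ t ∈ Icc s d, Tendsto (fun n => vₙ n t) atTop (𝓝 (v t))) (hvc : Continuous v) :
    ∀ t ∈ Icc s d, HasDerivWithinAt u (v t) (Icc s d) t := by
  have hu_eq (t : ℝ) (ht : t ∈ Icc s d) : u t = u s + ∫ r in s..t, v r := by
    have hsub : Icc s t ⊆ Icc s d := Icc_subset_Icc_right ht.2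
    have hsub' : uIoc s t ⊆ Icc s d := by
      rw [uIoc_of_le ht.1]
      exact Ioc_subset_Icc_self.trans hsub
    have hint (n : ℕ) : ∫ r in s..t, vₙ n r = uₙ n t - uₙ n s :=
      intervalIntegral.integral_eq_sub_of_hasDerivAt_of_le ht.1
        (fun r hr => ((hderiv n r (hsub hr)).mono hsub).continuousWithinAt)
        (fun r hr => (hderiv n r (hsub (Ioo_subset_Icc_self hr))).hasDerivAt
          (Icc_mem_nhds hr.1 (hr.2.trans_le ht.2)))
        (((hvₙ n).mono hsub).intervalIntegrable_of_Icc ht.1)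
    have hlim : Tendsto (fun n => ∫ r in s..t, vₙ n r) atTop (𝓝 (∫ r in s..t, v r)) :=
      intervalIntegral.tendsto_integral_filter_of_dominated_convergence (fun _ => M)
        (Eventually.of_forall fun n =>
          ((hvₙ n).mono hsub').aestronglyMeasurable measurableSet_uIoc)
        (Eventually.of_forall fun n => ae_of_all _ fun r hr => hM n r (hsub' hr))
        intervalIntegrable_const (ae_of_all _ fun r hr => hv r (hsub' hr))
    simp only [hint] at hlim
    rw [← tendsto_nhds_unique ((hu t ht).sub (hu s ⟨le_rfl, ht.1.trans ht.2⟩)) hlim]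
    abel
  intro t ht
  exact (((hvc.integral_hasStrictDerivAt s t).hasDerivAt.const_add (u s)).hasDerivWithinAt).congr
    hu_eq (hu_eq t ht)

variable {X : Type*} [NormedAddCommGroup X] [NormedSpace ℝ X] [CompleteSpace X]
  {R B : ℝ → X →L[ℝ] X} {C : ℝ → ℝ → X →L[ℝ] X} {K c d : ℝ} {Φ : ℕ → ℝ → ℝ → X →L[ℝ] X}

namespace IsKatoFamily

lemma norm_propagator_sub_exp_apply_le (hR : IsKatoFamily R C B K c d) {lam : ℝ} (hlam : 0 < lam)
    {Φ : ℝ → ℝ → X →L[ℝ] X} (hΦ : IsPropagatorOf (fun t => yosida (R t) lam) c d Φ) {s q t : ℝ}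
    (hs : s ∈ Icc c d) (hq : q ∈ Icc s d) (ht : t ∈ Icc q d) (y z : X) :
    ‖Φ t s (R s y) - NormedSpace.exp ((t - q) • yosida (R q) lam) z‖ ≤
      K * (t - q) ^ 2 * (‖y‖ * exp (K * (d - c))) + ‖Φ q s (R s y) - z‖ := by
  obtain ⟨w, hw⟩ := hΦ.exists_isMildSolution hR.norm_limit_le hR.continuous_limit hs.2 y
  have hRw := hR.inverse_apply_mildSolution hlam hΦ hs hw hq
  set E := NormedSpace.exp ((t - q) • yosida (R q) lam)
  have hsplit : Φ t s (R s y) - E z =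
      (Φ t q (R q (w q)) - E (R q (w q))) + E (Φ q s (R s y) - z) := by
    rw [← hΦ.apply_apply hq.1 ht.1, ← hRw, map_sub]
    abel
  rw [hsplit]
  refine norm_add_le_of_le ?_ (((hR.isMaxDissipativeInverse q).isDissipative_yosida
    hlam).norm_exp_smul_apply_le (sub_nonneg.2 ht.1) _)
  have hK := hR.nonneg
  refine (hR.norm_propagator_sub_exp_le hlam hΦ ⟨hs.1.trans hq.1, hq.2⟩ ht (w q)).trans ?_
  gcongr
  exact hR.norm_mildSolution_le hΦ.toIsContractionPropagator hs hw hq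

lemma exists_cauchySeq_dist_propagator_le (hR : IsKatoFamily R C B K c d)
    (hΦ : ∀ n : ℕ, IsPropagatorOf (fun t => yosida (R t) (n + 1)) c d (Φ n)) {s h : ℝ}
    (hs : s ∈ Icc c d) (hh : 0 ≤ h) (y : X) (k : ℕ) (hk : s + k * h ≤ d) :
    ∃ z : ℕ → X, CauchySeq z ∧ ∀ n, dist (Φ n (s + k * h) s (R s y)) (z n) ≤
      k * (K * h ^ 2 * (‖y‖ * exp (K * (d - c)))) := by
  have hmax := hR.isMaxDissipativeInverse
  have hpos (n : ℕ) : (0 : ℝ) < n + 1 := n.cast_add_one_pos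
  induction k with
  | zero => exact ⟨fun _ => R s y, cauchySeq_const _, fun n => by simp [(hΦ n).eq_one le_rfl]⟩
  | succ k ih =>
    set q := s + k * h
    have hstep : s + (k + 1 : ℕ) * h = q + h := by
      simp only [q]
      push_cast
      ring
    rw [hstep] at hk ⊢
    have hq : q ∈ Icc s d := ⟨le_add_of_nonneg_right (by positivity), by linarith⟩
    obtain ⟨z, hz, hdist⟩ := ih hq.2
    refine ⟨fun n => NormedSpace.exp (h • yosida (R q) (n + 1)) (z n),
      cauchySeq_clm_apply_of_norm_le (T := fun n : ℕ => NormedSpace.exp (h • yosida (R q) (n + 1)))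
        (M := 1) (fun n => ?_) ((hmax q).cauchySeq_exp_yosida (hR.denseRange q) hh) hz,
      fun n => ?_⟩
    · exact ContinuousLinearMap.opNorm_le_bound _ zero_le_one fun x => by
        simpa using ((hmax q).isDissipative_yosida (hpos n)).norm_exp_smul_apply_le hh x
    · have hest := hR.norm_propagator_sub_exp_apply_le (hpos n) (hΦ n) hs hq
        (t := q + h) ⟨le_add_of_nonneg_right hh, hk⟩ y (z n)
      rw [add_sub_cancel_left, ← dist_eq_norm, ← dist_eq_norm] at hest
      push_cast
      linarith [hdist n]

lemma cauchySeq_propagator_inverse (hR : IsKatoFamily R C B K c d)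
    (hΦ : ∀ n : ℕ, IsPropagatorOf (fun t => yosida (R t) (n + 1)) c d (Φ n)) {s t : ℝ}
    (hs : s ∈ Icc c d) (ht : t ∈ Icc s d) (y : X) :
    CauchySeq fun n => Φ n t s (R s y) := by
  refine cauchySeq_of_forall_exists_cauchySeq fun ε hε => ?_
  set M := K * (t - s) ^ 2 * (‖y‖ * exp (K * (d - c)))
  obtain ⟨N, hN⟩ := exists_nat_gt (M / ε)
  have hN1 : (0 : ℝ) < N + 1 := N.cast_add_one_pos
  have hendpoint : s + (N + 1 : ℕ) * ((t - s) / (N + 1)) = t := by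
    push_cast
    field_simp
    ring
  obtain ⟨z, hz, hdist⟩ := hR.exists_cauchySeq_dist_propagator_le hΦ hs
    (h := (t - s) / (N + 1)) (div_nonneg (sub_nonneg.2 ht.1) hN1.le) y (N + 1)
    (hendpoint.trans_le ht.2)
  rw [hendpoint] at hdist
  refine ⟨z, hz, fun n => (hdist n).trans ?_⟩
  calc ((N + 1 : ℕ) : ℝ) * (K * ((t - s) / (N + 1)) ^ 2 * (‖y‖ * exp (K * (d - c))))
      = M / (N + 1) := by
        simp only [M]
        push_cast
        field_simp
    _ ≤ ε := by
        rw [div_lt_iff₀ hε] at hN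
        rw [div_le_iff₀ hN1]
        linarith

lemma cauchySeq_propagator (hR : IsKatoFamily R C B K c d)
    (hΦ : ∀ n : ℕ, IsPropagatorOf (fun t => yosida (R t) (n + 1)) c d (Φ n)) (hcd : c ≤ d)
    (t s : ℝ) (x : X) : CauchySeq fun n => Φ n t s x := by
  have hs := (projIcc c d hcd s).2
  simp only [← (hΦ _).clamp hcd t s]
  rcases le_total t s with hts | hst
  · simp only [(hΦ _).eq_one (monotone_projIcc hcd hts)]
    exact cauchySeq_const _
  refine cauchySeq_clm_apply_of_dense (hR.denseRange (projIcc c d hcd s))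
    (fun n => (hΦ n).norm_le_one _ _) ?_ x
  rintro _ ⟨y, rfl⟩
  exact hR.cauchySeq_propagator_inverse hΦ hs
    ⟨monotone_projIcc hcd hst, (projIcc c d hcd t).2.2⟩ y

lemma exists_tendsto_propagator (hR : IsKatoFamily R C B K c d)
    (hΦ : ∀ n : ℕ, IsPropagatorOf (fun t => yosida (R t) (n + 1)) c d (Φ n)) (hcd : c ≤ d) :
    ∃ V, IsContractionPropagator V ∧
      ∀ t s x, Tendsto (fun n => Φ n t s x) atTop (𝓝 (V t s x)) := by
  choose v hv using fun t s x =>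
    cauchySeq_tendsto_of_complete (hR.cauchySeq_propagator hΦ hcd t s x)
  let V (t s : ℝ) : X →L[ℝ] X := continuousLinearMapOfTendsto (fun n => Φ n t s)
    (tendsto_pi_nhds.2 (hv t s))
  have hV (t s : ℝ) (x : X) : Tendsto (fun n => Φ n t s x) atTop (𝓝 (V t s x)) := hv t s x
  have hnorm (t s : ℝ) : ‖V t s‖ ≤ 1 :=
    ContinuousLinearMap.opNorm_le_bound _ zero_le_one fun x => le_of_tendsto (hV t s x).norm
      (Eventually.of_forall fun n => by simpa using (hΦ n).norm_apply_le t s x)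
  refine ⟨V, .of_lipschitz hnorm (fun {t s} hts => ?_) (fun {t r s} hsr hrt x => ?_)
    (hR.denseRange c) ?_, hV⟩
  · ext x
    refine tendsto_nhds_unique (hV t s x) ?_
    simp only [(hΦ _).eq_one hts]
    exact tendsto_const_nhds
  · refine tendsto_nhds_unique ?_ (hV t s x)
    simp only [← (hΦ _).apply_apply hsr hrt]
    exact tendsto_clm_apply_of_norm_le (fun n => (hΦ n).norm_le_one t r) (hV r s x) (hV t r _)
  · rintro _ ⟨y, rfl⟩
    obtain ⟨Λ, hΛ⟩ := hR.exists_lipschitzWith_propagator hcd y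
    refine ⟨Λ, fun s => LipschitzWith.of_dist_le_mul fun t t' => le_of_tendsto
      ((hV t s _).dist (hV t' s _)) (Eventually.of_forall fun n => ?_)⟩
    exact (hΛ (n + 1) n.cast_add_one_pos (Φ n) (hΦ n) s).dist_le_mul t t'

lemma exists_hasDerivWithinAt_of_tendsto (hR : IsKatoFamily R C B K c d)
    (hΦ : ∀ n : ℕ, IsPropagatorOf (fun t => yosida (R t) (n + 1)) c d (Φ n))
    {V : ℝ → ℝ → X →L[ℝ] X} (hV : IsContractionPropagator V)
    (hΦV : ∀ t s x, Tendsto (fun n => Φ n t s x) atTop (𝓝 (V t s x))) {s : ℝ}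
    (hs : s ∈ Icc c d) (y : X) :
    ∃ w : ℝ → X, ∀ t ∈ Icc s d,
      V t s (R s y) = R t (w t) ∧
        HasDerivWithinAt (fun t => V t s (R s y)) (w t) (Icc s d) t := by
  have hpos (n : ℕ) : (0 : ℝ) < n + 1 := n.cast_add_one_pos
  have hmax := hR.isMaxDissipativeInverse
  obtain ⟨w, hw⟩ := hV.exists_isMildSolution hR.norm_limit_le hR.continuous_limit hs.2 y
  choose wₙ hwₙ using fun n =>
    (hΦ n).exists_isMildSolution hR.norm_limit_le hR.continuous_limit hs.2 y
  have hlim {t : ℝ} (ht : t ∈ Icc s d) : Tendsto (fun n => wₙ n t) atTop (𝓝 (w t)) :=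
    IsMildSolution.tendsto hwₙ hw (fun n => (hΦ n).toIsContractionPropagator) hΦV hR.norm_limit_le
      hR.continuous_limit ht
  have hyosida {t : ℝ} (ht : t ∈ Icc s d) :
      Tendsto (fun n : ℕ => R t (yosida (R t) (n + 1) (wₙ n t))) atTop (𝓝 (w t)) :=
    tendsto_clm_apply_of_norm_le (T := fun n : ℕ => R t * yosida (R t) (n + 1)) (M := 1)
      (fun n => ContinuousLinearMap.opNorm_le_bound _ zero_le_one fun x => by
        simpa using (hmax t).norm_apply_yosida_le (hpos n) x)
      (hlim ht) ((hmax t).tendsto_apply_yosida (hR.denseRange t) (w t))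
  refine ⟨w, fun t ht => ⟨?_, hasDerivWithinAt_of_tendsto_of_norm_le
    (fun n r hr => hR.hasDerivWithinAt_propagator_inverse (hpos n) (hΦ n) hs (hwₙ n) hr)
    (fun n => (hR.continuous_inverse.clm_apply ((hR.continuous_yosida (hpos n)).clm_apply
      (hwₙ n).continuous)).continuousOn)
    (fun n r hr => ((hmax r).norm_apply_yosida_le (hpos n) _).trans
      (hR.norm_mildSolution_le (hΦ n).toIsContractionPropagator hs (hwₙ n) hr))
    (fun r _ => hΦV r s _) (fun r hr => hyosida hr) hw.continuous t ht⟩⟩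
  refine tendsto_nhds_unique (hΦV t s _) ?_
  simp only [← hR.inverse_apply_mildSolution (hpos _) (hΦ _) hs (hwₙ _) ht]
  exact ((R t).continuous.tendsto _).comp (hlim ht)

lemma exists_contractionPropagator (hR : IsKatoFamily R C B K c d) (hcd : c ≤ d) :
    ∃ V, IsContractionPropagator V ∧ ∀ s ∈ Icc c d, ∀ y, ∃ w : ℝ → X, ∀ t ∈ Icc s d,
      V t s (R s y) = R t (w t) ∧
        HasDerivWithinAt (fun t => V t s (R s y)) (w t) (Icc s d) t := by
  choose Φ hΦ using fun n : ℕ => hR.exists_isPropagatorOf_yosida n.cast_add_one_pos hcd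
  obtain ⟨V, hV, hΦV⟩ := hR.exists_tendsto_propagator hΦ hcd
  exact ⟨V, hV, fun s hs y => hR.exists_hasDerivWithinAt_of_tendsto hΦ hV hΦV hs y⟩

end IsKatoFamily

end YosidaLimit

lemma exists_clm_eq_of_injective_comp {𝕜 E F G : Type*} [NontriviallyNormedField 𝕜]
    [NormedAddCommGroup E] [NormedSpace 𝕜 E] [CompleteSpace E] [NormedAddCommGroup F]
    [NormedSpace 𝕜 F] [CompleteSpace F] [NormedAddCommGroup G] [NormedSpace 𝕜 G] {R : F →L[𝕜] G}
    (hR : Function.Injective R) {Q : E →L[𝕜] G} {f : E → F} (hf : ∀ x, R (f x) = Q x) :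
    ∃ C : E →L[𝕜] F, ∀ x, C x = f x := by
  let g : E →ₗ[𝕜] F :=
    { toFun := f
      map_add' := fun x y => hR (by simp only [map_add, hf])
      map_smul' := fun a x => hR (by simp only [map_smul, hf, RingHom.id_apply]) }
  have hg : Continuous g := g.continuous_of_seq_closed_graph fun u x y hu hy => by
    refine hR (tendsto_nhds_unique ((R.continuous.tendsto y).comp hy) ?_)
    have hlim := (Q.continuous.tendsto x).comp hu
    rw [← hf x] at hlim
    exact hlim.congr fun n => (hf (u n)).symm
  exact ⟨⟨g, hg⟩, fun _ => rfl⟩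

lemma exists_norm_le_of_uniformContinuousOn {α E : Type*} [UniformSpace α]
    [SeminormedAddCommGroup E] {f : α → E} {s : Set α} (hs : TotallyBounded s)
    (hf : UniformContinuousOn f s) : ∃ M, ∀ x ∈ s, ‖f x‖ ≤ M := by
  have hs' : TotallyBounded (univ : Set s) := by
    simpa using totallyBounded_preimage (isUniformInducing_val s) hs
  obtain ⟨M, hM⟩ := (hs'.image (uniformContinuousOn_iff_restrict.1 hf)).isBounded.exists_norm_le
  exact ⟨M, fun x hx => hM _ ⟨⟨x, hx⟩, mem_univ _, rfl⟩⟩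

lemma tendsto_nhdsWithin_sdiff_of_forall_norm_sub_lt {E : Type*} [SeminormedAddCommGroup E]
    {q : ℝ → ℝ → E} {l : ℝ → E} {S : Set ℝ}
    (hq : ∀ ε : ℝ, 0 < ε → ∃ δ : ℝ, 0 < δ ∧ ∀ t ∈ S, ∀ s ∈ S, s ≠ t → |t - s| < δ →
      ‖q t s - l t‖ < ε) (hl : ContinuousOn l S) {t : ℝ} (ht : t ∈ S) :
    Tendsto (fun τ => q τ t) (𝓝[S \ {t}] t) (𝓝 (l t)) := by
  have hdiff : Tendsto (fun τ => q τ t - l τ) (𝓝[S \ {t}] t) (𝓝 0) := by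
    refine Metric.tendsto_nhds.2 fun ε hε => ?_
    obtain ⟨δ, hδ, hqδ⟩ := hq ε hε
    filter_upwards [self_mem_nhdsWithin, mem_nhdsWithin_of_mem_nhds (Metric.ball_mem_nhds t hδ)]
      with τ hτ hτδ
    rw [dist_zero_right]
    exact hqδ τ hτ.1 t ht (Ne.symm hτ.2) hτδ
  simpa using hdiff.add ((hl t ht).mono_left (nhdsWithin_mono t sdiff_subset))

section Operators

variable {X : Type*} [NormedAddCommGroup X] [NormedSpace ℝ X] {c d : ℝ}

lemma exists_norm_sub_one_le_mul_abs_sub [CompleteSpace X] {C : ℝ → ℝ → X →L[ℝ] X}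
    (hone : ∀ t ∈ Icc c d, C t t = 1)
    (hC : ∀ x, UniformContinuousOn (fun q : ℝ × ℝ => (q.1 - q.2)⁻¹ • (C q.1 q.2 x - x))
      {q : ℝ × ℝ | q.1 ∈ Icc c d ∧ q.2 ∈ Icc c d ∧ q.1 ≠ q.2}) :
    ∃ K, ∀ t ∈ Icc c d, ∀ s ∈ Icc c d, ‖C t s - 1‖ ≤ K * |t - s| := by
  let S : Set (ℝ × ℝ) := {q | q.1 ∈ Icc c d ∧ q.2 ∈ Icc c d ∧ q.1 ≠ q.2}
  have hS : TotallyBounded S := (isCompact_Icc.prod isCompact_Icc).totallyBounded.subset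
    fun _ hq => mk_mem_prod hq.1 hq.2.1
  have hbdd (x : X) : ∃ M, ∀ q : S, ‖((q.1.1 - q.1.2)⁻¹ • (C q.1.1 q.1.2 - 1)) x‖ ≤ M := by
    obtain ⟨M, hM⟩ := exists_norm_le_of_uniformContinuousOn hS (hC x)
    exact ⟨M, fun q => by simpa using hM q.1 q.2⟩
  obtain ⟨K, hK⟩ := banach_steinhaus hbdd
  refine ⟨K, fun t ht s hs => ?_⟩
  rcases eq_or_ne t s with rfl | hts
  · simp [hone t ht]
  · have h := hK ⟨(t, s), ht, hs, hts⟩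
    rw [norm_smul, norm_inv, Real.norm_eq_abs,
      inv_mul_le_iff₀ (abs_pos.2 (sub_ne_zero.2 hts))] at h
    rwa [mul_comm]

/-- `A`, with domain `D`, is a maximally dissipative operator with bounded inverse `R`; the values
of `A` outside `D` are irrelevant, and linearity of `A` on `D` follows from that of `R`. -/
structure IsMaxDissipativeWithInverse (D : Submodule ℝ X) (A : X → X) (R : X →L[ℝ] X) : Prop where
  inverse_mem : ∀ x, R x ∈ D
  apply_inverse : ∀ x, A (R x) = x
  inverse_apply : ∀ x ∈ D, R (A x) = x
  dissipative : ∀ x ∈ D, ∀ lam : ℝ, 0 < lam → lam * ‖x‖ ≤ ‖lam • x - A x‖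
  surjective : ∃ lam : ℝ, 0 < lam ∧ ∀ y, ∃ x ∈ D, lam • x - A x = y

namespace IsMaxDissipativeWithInverse

variable {D : Submodule ℝ X} {A : X → X} {R : X →L[ℝ] X}

lemma injective_inverse (hA : IsMaxDissipativeWithInverse D A R) : Function.Injective R :=
  Function.LeftInverse.injective hA.apply_inverse

lemma map_sub (hA : IsMaxDissipativeWithInverse D A R) {x y : X} (hx : x ∈ D) (hy : y ∈ D) :
    A (x - y) = A x - A y :=
  hA.injective_inverse <| by
    rw [_root_.map_sub, hA.inverse_apply _ (D.sub_mem hx hy), hA.inverse_apply x hx,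
      hA.inverse_apply y hy]

lemma isMaxDissipativeInverse (hA : IsMaxDissipativeWithInverse D A R) :
    IsMaxDissipativeInverse R where
  dissipative lam hlam y := by
    simpa only [hA.apply_inverse] using hA.dissipative (R y) (hA.inverse_mem y) lam hlam
  surjective := by
    obtain ⟨lam, hlam, hsurj⟩ := hA.surjective
    refine ⟨lam, hlam, fun z => ?_⟩
    obtain ⟨x, hx, hxz⟩ := hsurj z
    exact ⟨A x, by rw [hA.inverse_apply x hx, hxz]⟩

lemma denseRange_inverse (hA : IsMaxDissipativeWithInverse D A R) (hD : Dense (D : Set X)) :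
    DenseRange R :=
  hD.mono fun x hx => ⟨A x, hA.inverse_apply x hx⟩

end IsMaxDissipativeWithInverse

variable {D : Submodule ℝ X} {A : ℝ → X → X} {R L : ℝ → X →L[ℝ] X}

lemma exists_isKatoFamily [CompleteSpace X] (hcd : c ≤ d) (hD : Dense (D : Set X))
    (hA : ∀ t ∈ Icc c d, IsMaxDissipativeWithInverse D (A t) (R t))
    (hquot : ∀ x, UniformContinuousOn
      (fun q : ℝ × ℝ => (q.1 - q.2)⁻¹ • (A q.1 (R q.2 x) - x))
      {q : ℝ × ℝ | q.1 ∈ Icc c d ∧ q.2 ∈ Icc c d ∧ q.1 ≠ q.2})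
    (hlim : ∀ x, ∀ t ∈ Icc c d,
      Tendsto (fun τ => (τ - t)⁻¹ • (A τ (R t x) - x)) (𝓝[Icc c d \ {t}] t) (𝓝 (L t x)))
    (hLbdd : ∃ K, ∀ t ∈ Icc c d, ‖L t‖ ≤ K) (hL : ∀ x, ContinuousOn (fun t => L t x) (Icc c d)) :
    ∃ C B K, IsKatoFamily (fun t => R (projIcc c d hcd t)) C B K c d := by
  have hratio (t s : Icc c d) : ∃ C : X →L[ℝ] X, ∀ x, C x = A t (R s x) :=
    exists_clm_eq_of_injective_comp (hA t t.2).injective_inverse (Q := R s) fun x =>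
      (hA t t.2).inverse_apply _ ((hA s s.2).inverse_mem x)
  choose C hC using hratio
  let p : ℝ → Icc c d := projIcc c d hcd
  have hp {t : ℝ} (ht : t ∈ Icc c d) : p t = ⟨t, ht⟩ := projIcc_of_mem hcd ht
  obtain ⟨K₁, hK₁⟩ := exists_norm_sub_one_le_mul_abs_sub (C := fun t s => C (p t) (p s))
    (fun t _ => ContinuousLinearMap.ext fun x => by
      rw [hC, (hA _ (p t).2).apply_inverse, one_apply_eq_self])
    (fun x => (hquot x).congr fun q hq => by simp only [hC, hp hq.1, hp hq.2.1])
  obtain ⟨K₂, hK₂⟩ := hLbdd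
  refine ⟨fun t s => C (p t) (p s), fun t => L (p t), max (max K₁ K₂) 0, ?_⟩
  constructor
  · exact fun t => (hA _ (p t).2).isMaxDissipativeInverse
  · exact fun t => (hA _ (p t).2).denseRange_inverse hD
  · intro t s x
    rw [hC]
    exact (hA _ (p t).2).inverse_apply _ ((hA _ (p s).2).inverse_mem x)
  · intro t s
    have h := hK₁ (p t) (p t).2 (p s) (p s).2
    simp only [p, projIcc_val] at h
    refine h.trans (mul_le_mul ((le_max_left _ _).trans (le_max_left _ _))
      (abs_projIcc_sub_projIcc hcd) (abs_nonneg _) (le_max_right _ _))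
  · exact fun t => (hK₂ _ (p t).2).trans ((le_max_right _ _).trans (le_max_left _ _))
  · exact fun x => (hL x).comp_continuous (continuous_subtype_val.comp continuous_projIcc)
      fun t => (p t).2
  · intro x t ht
    rw [hp ht]
    refine (hlim x t ht).congr' ?_
    filter_upwards [self_mem_nhdsWithin] with τ hτ
    rw [hC, hp hτ.1]

/-- `V` is a contraction propagator which solves the Cauchy problem `u' = A u` for initial values in
the domain `D` classically on `[c, d]`. -/
structure IsClassicalPropagator (D : Submodule ℝ X) (A : ℝ → X → X) (c d : ℝ)
    (V : ℝ → ℝ → X →L[ℝ] X) : Prop extends IsContractionPropagator V where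
  mem : ∀ {s}, s ∈ Icc c d → ∀ {t}, t ∈ Icc s d → ∀ {x}, x ∈ D → V t s x ∈ D
  hasDerivWithinAt : ∀ {s}, s ∈ Icc c d → ∀ {t}, t ∈ Icc s d → ∀ {x}, x ∈ D →
    HasDerivWithinAt (fun t => V t s x) (A t (V t s x)) (Icc s d) t

lemma IsKatoFamily.exists_isClassicalPropagator [CompleteSpace X] {B : ℝ → X →L[ℝ] X}
    {C : ℝ → ℝ → X →L[ℝ] X} {K : ℝ} {hcd : c ≤ d}
    (hR : IsKatoFamily (fun t => R (projIcc c d hcd t)) C B K c d)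
    (hA : ∀ t ∈ Icc c d, IsMaxDissipativeWithInverse D (A t) (R t)) :
    ∃ V, IsClassicalPropagator D A c d V := by
  obtain ⟨V, hV, hVsol⟩ := hR.exists_contractionPropagator hcd
  have hsol {s : ℝ} (hs : s ∈ Icc c d) {t : ℝ} (ht : t ∈ Icc s d) {x : X} (hx : x ∈ D) :
      V t s x ∈ D ∧ HasDerivWithinAt (fun t => V t s x) (A t (V t s x)) (Icc s d) t := by
    have htcd : t ∈ Icc c d := ⟨hs.1.trans ht.1, ht.2⟩
    obtain ⟨w, hw⟩ := hVsol s hs (A s x)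
    obtain ⟨hRw, hderiv⟩ := hw t ht
    rw [projIcc_of_mem hcd hs, (hA s hs).inverse_apply x hx] at hRw hderiv
    rw [projIcc_of_mem hcd htcd] at hRw
    rw [hRw, (hA t htcd).apply_inverse]
    exact ⟨(hA t htcd).inverse_mem _, hderiv⟩
  exact ⟨V, hV, fun hs _ ht _ hx => (hsol hs ht hx).1, fun hs _ ht _ hx => (hsol hs ht hx).2⟩

namespace IsClassicalPropagator

variable {V V' : ℝ → ℝ → X →L[ℝ] X}

lemma eq_of_mem (hV : IsClassicalPropagator D A c d V) {c' d' : ℝ}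
    (hV' : IsClassicalPropagator D A c' d' V') (hD : Dense (D : Set X))
    (hA : ∀ t ∈ Icc c d, IsMaxDissipativeWithInverse D (A t) (R t)) {s t : ℝ}
    (hs : s ∈ Icc c d) (ht : t ∈ Icc s d) (hs' : s ∈ Icc c' d') (ht' : t ∈ Icc s d') :
    V t s = V' t s := by
  refine DFunLike.coe_injective ((V t s).continuous.ext_on hD (V' t s).continuous fun x hx => ?_)
  have hr {d : ℝ} (ht : t ∈ Icc s d) {r : ℝ} (hr : r ∈ Icc s t) : r ∈ Icc s d :=
    ⟨hr.1, hr.2.trans ht.2⟩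
  have hAr {r : ℝ} (hr : r ∈ Icc s t) := hA r ⟨hs.1.trans hr.1, hr.2.trans ht.2⟩
  have h := norm_right_le_norm_left_add_of_dissipative (u := fun r => V r s x - V' r s x) (ε := 0)
    ht.1 (fun r hrt => ((hV.hasDerivWithinAt hs (hr ht hrt) hx).mono
        (Icc_subset_Icc_right ht.2)).sub
      ((hV'.hasDerivWithinAt hs' (hr ht' hrt) hx).mono (Icc_subset_Icc_right ht'.2)))
    fun r hrt μ hμ => ?_
  · simpa [hV.eq_one le_rfl, hV'.eq_one le_rfl, sub_eq_zero] using h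
  have hrt := Ioc_subset_Icc_self hrt
  have hVD := hV.mem hs (hr ht hrt) hx
  have hVD' := hV'.mem hs' (hr ht' hrt) hx
  rw [← (hAr hrt).map_sub hVD hVD', add_zero]
  exact (hAr hrt).dissipative _ (D.sub_mem hVD hVD') μ hμ

end IsClassicalPropagator

/-- `U` agrees on every compact interval in `I` with a contraction propagator which solves the
Cauchy problem `u' = A u` classically there. Nothing is required of `U t s` outside `I`. -/
def IsLocallyClassicalPropagator (D : Submodule ℝ X) (A : ℝ → X → X) (I : Set ℝ)
    (U : ℝ → ℝ → X →L[ℝ] X) : Prop :=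
  ∀ c d, c ≤ d → Icc c d ⊆ I → ∃ V, IsClassicalPropagator D A c d V ∧
    ∀ s ∈ Icc c d, ∀ t ∈ Icc s d, U t s = V t s

variable {I : Set ℝ} {U : ℝ → ℝ → X →L[ℝ] X}

lemma exists_isLocallyClassicalPropagator (hD : Dense (D : Set X))
    (hA : ∀ t ∈ I, IsMaxDissipativeWithInverse D (A t) (R t))
    (hV : ∀ c d, c ≤ d → Icc c d ⊆ I → ∃ V, IsClassicalPropagator D A c d V) :
    ∃ U, IsLocallyClassicalPropagator D A I U := by
  choose! V hV using hV
  refine ⟨fun t s => V s t t s, fun c d hcd hI => ⟨V c d, hV c d hcd hI, fun s hs t ht => ?_⟩⟩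
  have hst : Icc s t ⊆ I := (Icc_subset_Icc hs.1 ht.2).trans hI
  exact (hV s t ht.1 hst).eq_of_mem (hV c d hcd hI) hD (fun r hr => hA r (hst hr))
    (left_mem_Icc.2 ht.1) (right_mem_Icc.2 ht.1) hs ht

namespace IsLocallyClassicalPropagator

lemma eq_one (hU : IsLocallyClassicalPropagator D A I U) {t : ℝ} (ht : t ∈ I) : U t t = 1 := by
  obtain ⟨V, hV, hUV⟩ := hU t t le_rfl (by simpa using ht)
  rw [hUV t (by simp) t (by simp), hV.eq_one le_rfl]

lemma comp_eq (hU : IsLocallyClassicalPropagator D A I U) (hI : I.OrdConnected) {t r s : ℝ}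
    (ht : t ∈ I) (hs : s ∈ I) (hsr : s ≤ r) (hrt : r ≤ t) : (U t r).comp (U r s) = U t s := by
  have hst := hsr.trans hrt
  obtain ⟨V, hV, hUV⟩ := hU s t hst (hI.out hs ht)
  rw [hUV r ⟨hsr, hrt⟩ t ⟨hrt, le_rfl⟩, hUV s ⟨le_rfl, hst⟩ r ⟨hsr, hrt⟩,
    hUV s ⟨le_rfl, hst⟩ t ⟨hst, le_rfl⟩]
  exact ContinuousLinearMap.ext (hV.apply_apply hsr hrt)

lemma norm_le_one (hU : IsLocallyClassicalPropagator D A I U) (hI : I.OrdConnected) {t s : ℝ}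
    (ht : t ∈ I) (hs : s ∈ I) (hst : s ≤ t) : ‖U t s‖ ≤ 1 := by
  obtain ⟨V, hV, hUV⟩ := hU s t hst (hI.out hs ht)
  rw [hUV s ⟨le_rfl, hst⟩ t ⟨hst, le_rfl⟩]
  exact hV.norm_le_one t s

lemma continuousOn_apply (hU : IsLocallyClassicalPropagator D A I U) (hI : I.OrdConnected)
    (hIo : IsOpen I) (x : X) : ContinuousOn (fun q : ℝ × ℝ => U q.1 q.2 x)
      {q : ℝ × ℝ | q.1 ∈ I ∧ q.2 ∈ I ∧ q.2 ≤ q.1} := by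
  rintro ⟨t, s⟩ ⟨ht : t ∈ I, hs : s ∈ I, hst : s ≤ t⟩
  obtain ⟨d, htd, hd⟩ := (hIo.eventually_mem ht).exists_gt
  obtain ⟨c, hcs, hc⟩ := (hIo.eventually_mem hs).exists_lt
  obtain ⟨V, hV, hUV⟩ := hU c d (hcs.le.trans (hst.trans htd.le)) (hI.out hc hd)
  refine (hV.continuous_apply x).continuousWithinAt.congr_of_eventuallyEq ?_
    (congrArg (· x) (hUV s ⟨hcs.le, hst.trans htd.le⟩ t ⟨hst, htd.le⟩))
  filter_upwards [self_mem_nhdsWithin, mem_nhdsWithin_of_mem_nhds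
    (prod_mem_nhds (Iio_mem_nhds htd) (Ioi_mem_nhds hcs))] with q hq hqn
  rw [hUV q.2 ⟨hqn.2.le, hq.2.2.trans hqn.1.le⟩ q.1 ⟨hq.2.2, hqn.1.le⟩]

lemma mem_and_hasDerivWithinAt (hU : IsLocallyClassicalPropagator D A I U) (hI : I.OrdConnected)
    (hIo : IsOpen I) {s t : ℝ} (hs : s ∈ I) (ht : t ∈ I) (hst : s ≤ t) {x : X} (hx : x ∈ D) :
    U t s x ∈ D ∧ HasDerivWithinAt (fun τ => U τ s x) (A t (U t s x)) (I ∩ Ici s) t := by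
  obtain ⟨d, htd, hd⟩ := (hIo.eventually_mem ht).exists_gt
  have hsd := hst.trans htd.le
  have htsd : t ∈ Icc s d := ⟨hst, htd.le⟩
  obtain ⟨V, hV, hUV⟩ := hU s d hsd (hI.out hs hd)
  have hs' : s ∈ Icc s d := left_mem_Icc.2 hsd
  have hderiv : HasDerivWithinAt (fun τ => U τ s x) (A t (V t s x)) (Icc s d) t :=
    (hV.hasDerivWithinAt hs' htsd hx).congr (fun τ hτ => by rw [hUV s hs' τ hτ])
      (by rw [hUV s hs' t htsd])
  rw [hUV s hs' t htsd]
  refine ⟨hV.mem hs' htsd hx, hderiv.mono_of_mem_nhdsWithin ?_⟩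
  filter_upwards [self_mem_nhdsWithin, mem_nhdsWithin_of_mem_nhds (Iio_mem_nhds htd)]
    with τ hτ hτd
  exact ⟨hτ.2, hτd.le⟩

end IsLocallyClassicalPropagator

end Operators

/-- **Wellposedness for time-independent domains (Theorem 2.22).**
Let `I ⊆ ℝ` be an open interval and `A(t)`, `t ∈ I`, maximally dissipative
operators on a Banach space `X` with `0 ∈ ρ(A(t))`, a common dense domain
`D`, and such that `(t,s) ↦ (t−s)⁻¹(A(t)A(s)⁻¹ − 1)x` is uniformly strongly
continuous off the diagonal on compact subintervals, with a limit as `s → t`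
that exists uniformly, is bounded, and is continuous in `t`. Then there is a
strongly continuous, bounded propagator `U(t,s)` such that `t ↦ U(t,s)x` is a
classical solution of `u' = A(t)u`, `u(s) = x`, for every `x ∈ D`. -/
theorem time_independent_domain_wellposed
    {X : Type*} [NormedAddCommGroup X] [NormedSpace ℝ X] [CompleteSpace X]
    (I : Set ℝ) (hI_open : IsOpen I) (hI_conn : I.OrdConnected)
    -- the common domain `D`
    (D : Submodule ℝ X) (hdense : Dense (D : Set X))
    (Aop : ℝ → X → X)
    (hlin : ∀ t ∈ I, ∀ x ∈ D, ∀ y ∈ D, ∀ c : ℝ,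
      Aop t (x + y) = Aop t x + Aop t y ∧ Aop t (c • x) = c • Aop t x)
    -- `A(t)` is dissipative ...
    (hdiss : ∀ t ∈ I, ∀ x ∈ D, ∀ lam : ℝ, 0 < lam →
      lam * ‖x‖ ≤ ‖lam • x - Aop t x‖)
    -- ... and maximally so
    (hmax : ∀ t ∈ I, ∃ lam : ℝ, 0 < lam ∧ ∀ y : X, ∃ x ∈ D,
      lam • x - Aop t x = y)
    -- `0 ∈ ρ(A(t))`: bounded inverses `A(t)⁻¹`
    (Ainv : ℝ → X →L[ℝ] X)
    (hAinv_mem : ∀ t ∈ I, ∀ x : X, Ainv t x ∈ D ∧ Aop t (Ainv t x) = x)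
    (hAinv_inv : ∀ t ∈ I, ∀ y ∈ D, Ainv t (Aop t y) = y)
    -- (ii) uniform strong continuity of
    -- `(t,s) ↦ (t−s)⁻¹ (A(t)A(s)⁻¹ − 1) x` off the diagonal
    (hii : ∀ x : X, ∀ c d : ℝ, Icc c d ⊆ I →
      UniformContinuousOn
        (fun q : ℝ × ℝ => (q.1 - q.2)⁻¹ • (Aop q.1 (Ainv q.2 x) - x))
        {q : ℝ × ℝ | q.1 ∈ Icc c d ∧ q.2 ∈ Icc c d ∧ q.1 ≠ q.2})
    -- (iii) existence of the uniform limit as `s → t`; the limit is a bounded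
    -- operator, locally uniformly bounded and strongly continuous in `t`
    (L : ℝ → X →L[ℝ] X)
    (hiii : ∀ x : X, ∀ c d : ℝ, Icc c d ⊆ I → ∀ ε : ℝ, 0 < ε →
      ∃ δ : ℝ, 0 < δ ∧ ∀ t ∈ Icc c d, ∀ s ∈ Icc c d, s ≠ t → |t - s| < δ →
        ‖(t - s)⁻¹ • (Aop t (Ainv s x) - x) - L t x‖ < ε)
    (hL_bdd : ∀ c d : ℝ, Icc c d ⊆ I → ∃ K : ℝ, ∀ t ∈ Icc c d, ‖L t‖ ≤ K)
    (hL_cont : ∀ x : X, ContinuousOn (fun t => L t x) I) :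
    ∃ U : ℝ → ℝ → X →L[ℝ] X,
      -- `U` is a strongly continuous, bounded propagator
      (∀ t ∈ I, U t t = 1) ∧
      (∀ t ∈ I, ∀ r ∈ I, ∀ s ∈ I, s ≤ r → r ≤ t →
        (U t r).comp (U r s) = U t s) ∧
      (∀ x : X, ContinuousOn (fun q : ℝ × ℝ => U q.1 q.2 x)
        {q : ℝ × ℝ | q.1 ∈ I ∧ q.2 ∈ I ∧ q.2 ≤ q.1}) ∧
      (∃ C : ℝ, 1 ≤ C ∧ ∀ t ∈ I, ∀ s ∈ I, s ≤ t → ‖U t s‖ ≤ C) ∧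
      -- classical solvability for initial values in `D`
      (∀ s ∈ I, ∀ x ∈ D, ∀ t ∈ I, s ≤ t →
        U t s x ∈ D ∧
        HasDerivWithinAt (fun τ => U τ s x) (Aop t (U t s x))
          (I ∩ Ici s) t) := by
  have hA : ∀ t ∈ I, IsMaxDissipativeWithInverse D (Aop t) (Ainv t) := fun t ht =>
    ⟨fun x => (hAinv_mem t ht x).1, fun x => (hAinv_mem t ht x).2, hAinv_inv t ht, hdiss t ht,
      hmax t ht⟩
  have hlocal : ∀ c d, c ≤ d → Icc c d ⊆ I → ∃ V, IsClassicalPropagator D Aop c d V := by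
    intro c d hcd hcdI
    have hL (x : X) : ContinuousOn (fun t => L t x) (Icc c d) := (hL_cont x).mono hcdI
    have hlim (x : X) (t : ℝ) (ht : t ∈ Icc c d) :
        Tendsto (fun τ => (τ - t)⁻¹ • (Aop τ (Ainv t x) - x)) (𝓝[Icc c d \ {t}] t) (𝓝 (L t x)) :=
      tendsto_nhdsWithin_sdiff_of_forall_norm_sub_lt (hiii x c d hcdI) (hL x) ht
    obtain ⟨_, _, _, hR⟩ := exists_isKatoFamily hcd hdense (fun t ht => hA t (hcdI ht))
      (fun x => hii x c d hcdI) hlim (hL_bdd c d hcdI) hL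
    exact hR.exists_isClassicalPropagator fun t ht => hA t (hcdI ht)
  obtain ⟨U, hU⟩ := exists_isLocallyClassicalPropagator hdense hA hlocal
  exact ⟨U, fun t ht => hU.eq_one ht,
    fun t ht _ _ s hs hsr hrt => hU.comp_eq hI_conn ht hs hsr hrt,
    hU.continuousOn_apply hI_conn hI_open,
    ⟨1, le_rfl, fun t ht s hs hst => hU.norm_le_one hI_conn ht hs hst⟩,
    fun s hs x hx t ht hst => hU.mem_and_hasDerivWithinAt hI_conn hI_open hs ht hst hx⟩
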